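/- Let q be a prime power with q > 2 and let S be an algebraic hypersurface of PG(6,q^2) of degree q+1 defined over GF(q^2), not containing any solid, with exactly q^11 + q^9 + q^7 + q^4 + q^2 + 1 rational points, and let Sigma_3 be a solid with |S ∩ Sigma_3| = q^4 + q^2 + 1. Then every 5-dimensional projective subspace Sigma_5 of PG(6,q^2) containing Sigma_3 meets S in a Hermitian cone with vertex a point and base a non-singular Hermitian variety H(4,q^2); in particular |S ∩ Sigma_5| = q^9 + q^7 + q^4 + q^2 + 1. -/

import Mathlib

open MvPolynomial Module

/-- The set of points of the projective subspace of `PG(n-1, F)` determined by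
the linear subspace `W` of `F^n`. -/
def projPts {F : Type} [Field F] {n : ℕ} (W : Submodule F (Fin n → F)) :
    Set (Projectivization F (Fin n → F)) :=
  {P | P.submodule ≤ W}

/-- The set of `F`-rational points of the hypersurface of `PG(n-1, F)` defined by the
homogeneous polynomial `f`. -/
def hypersurfacePts {F : Type} [Field F] {n : ℕ} (f : MvPolynomial (Fin n) F) :
    Set (Projectivization F (Fin n → F)) :=
  {P | MvPolynomial.eval P.rep f = 0}


/-- `η` is a Hermitian (sesquilinear) form with respect to the involution `x ↦ x^q`:
additive in each argument, `F`-linear in the first, with `η w v = (η v w)^q`. -/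
def IsHermitianForm (q : ℕ) {F : Type} [Field F] {V : Type} [AddCommGroup V] [Module F V]
    (η : V → V → F) : Prop :=
  (∀ u v w, η (u + v) w = η u w + η v w) ∧
  (∀ u v w, η u (v + w) = η u v + η u w) ∧
  (∀ (a : F) (v w : V), η (a • v) w = a * η v w) ∧
  (∀ v w, η w v = (η v w) ^ q)

/-- The radical of the form `η` restricted to the subspace `W` has dimension `k`. -/
def HasRadicalDimOn {F : Type} [Field F] {n : ℕ}
    (η : (Fin n → F) → (Fin n → F) → F) (W : Submodule F (Fin n → F)) (k : ℕ) : Prop :=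
  ∃ R : Submodule F (Fin n → F), R ≤ W ∧ Module.finrank F R = k ∧
    ∀ v ∈ W, (v ∈ R ↔ ∀ w ∈ W, η v w = 0)

/-- `X` is the Hermitian variety of the projective subspace determined by `W` cut out by a
Hermitian form whose radical on `W` has dimension `k` (a non-singular Hermitian variety
if `k = 0`, a Hermitian cone with vertex of projective dimension `k - 1` otherwise). -/
def IsHermitianConeOn (q : ℕ) {F : Type} [Field F] {n : ℕ}
    (W : Submodule F (Fin n → F)) (k : ℕ)
    (X : Set (Projectivization F (Fin n → F))) : Prop :=
  ∃ η : (Fin n → F) → (Fin n → F) → F, IsHermitianForm q η ∧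
    HasRadicalDimOn η W k ∧
    X = {P | P.submodule ≤ W ∧ η P.rep P.rep = 0}

section
section Pencil

/-- The restriction of `f` to the parametrized line `u + X w`. -/
noncomputable def pencil {F : Type} [Field F] {n : ℕ} {R : Type} [CommRing R] [Algebra F R]
    (f : MvPolynomial (Fin n) F) (u w : Fin n → R) : Polynomial R :=
  aeval (fun i => Polynomial.C (u i) + Polynomial.C (w i) * Polynomial.X) f

variable {F : Type} [Field F] {n : ℕ} {R : Type} [CommRing R] [Algebra F R]

theorem pencil_eval (f : MvPolynomial (Fin n) F) (u w : Fin n → R) (r : R) :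
    (pencil f u w).eval r = aeval (fun i => u i + w i * r) f := by
  unfold pencil
  induction f using MvPolynomial.induction_on with
  | C a => simp [Polynomial.algebraMap_apply]
  | add p q hp hq => simp [hp, hq]
  | mul_X p i hp => simp [hp]

theorem pencil_coeff_zero (f : MvPolynomial (Fin n) F) (u w : Fin n → R) :
    (pencil f u w).coeff 0 = aeval u f := by
  rw [Polynomial.coeff_zero_eq_eval_zero, pencil_eval]; simp

theorem deriv_aeval {A : Type} [CommRing A] [Algebra F A] (D : Derivation F A A) (v : Fin n → A)
    (f : MvPolynomial (Fin n) F) :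
    D (aeval v f) = ∑ i, aeval v (pderiv i f) * D (v i) := by
  induction f using MvPolynomial.induction_on with
  | C a => simp
  | add p q hp hq => simp [hp, hq, add_mul, Finset.sum_add_distrib]
  | mul_X p i hp =>
    have h1 : ∀ j, aeval v (pderiv j (p * X i)) * D (v j) =
        v i * (aeval v (pderiv j p) * D (v j)) +
          (if j = i then aeval v p * D (v i) else 0) := by
      intro j
      rw [Derivation.leibniz, pderiv_X, Pi.single_apply]
      by_cases hj : j = i
      · subst hj; simp; ring
      · simp [hj, Ne.symm hj]; ring
    rw [Finset.sum_congr rfl fun j _ => h1 j, Finset.sum_add_distrib, ← Finset.mul_sum, ← hp]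
    simp
    ring

theorem pencil_derivative (f : MvPolynomial (Fin n) F) (u w : Fin n → R) :
    Polynomial.derivative (pencil f u w) =
      ∑ i, pencil (pderiv i f) u w * Polynomial.C (w i) := by
  have := deriv_aeval ((Polynomial.derivative' (R := R)).restrictScalars F)
    (fun i => Polynomial.C (u i) + Polynomial.C (w i) * Polynomial.X) f
  simpa [pencil] using this

/-- `p` has degree at most `N` with `N`-th coefficient `a`. -/
def TopC (p : Polynomial R) (N : ℕ) (a : R) : Prop := p.natDegree ≤ N ∧ p.coeff N = a

theorem TopC.mul {p p' : Polynomial R} {N N' : ℕ} {a a' : R} (h : TopC p N a) (h' : TopC p' N' a') :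
    TopC (p * p') (N + N') (a * a') :=
  ⟨Polynomial.natDegree_mul_le_of_le h.1 h'.1, by
    rw [Polynomial.coeff_mul_add_eq_of_natDegree_le h.1 h'.1, h.2, h'.2]⟩

theorem TopC.pow {p : Polynomial R} {N : ℕ} {a : R} (h : TopC p N a) (m : ℕ) :
    TopC (p ^ m) (m * N) (a ^ m) :=
  ⟨Polynomial.natDegree_pow_le_of_le m h.1, by
    rw [Polynomial.coeff_pow_of_natDegree_le h.1, h.2]⟩

theorem TopC.prod {ι : Type} (s : Finset ι) (p : ι → Polynomial R) (N : ι → ℕ) (a : ι → R)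
    (h : ∀ i ∈ s, TopC (p i) (N i) (a i)) : TopC (∏ i ∈ s, p i) (∑ i ∈ s, N i) (∏ i ∈ s, a i) := by
  classical
  induction s using Finset.induction_on with
  | empty => simp [TopC]
  | insert i s hi ih =>
    rw [Finset.prod_insert hi, Finset.sum_insert hi, Finset.prod_insert hi]
    exact (h i (by simp)).mul (ih fun j hj => h j (by simp [hj]))

theorem TopC.sum {ι : Type} (s : Finset ι) (p : ι → Polynomial R) (N : ℕ) (a : ι → R)
    (h : ∀ i ∈ s, TopC (p i) N (a i)) : TopC (∑ i ∈ s, p i) N (∑ i ∈ s, a i) := by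
  refine ⟨Polynomial.natDegree_sum_le_of_forall_le _ _ fun i hi => (h i hi).1, ?_⟩
  rw [Polynomial.finsetSum_coeff]
  exact Finset.sum_congr rfl fun i hi => (h i hi).2

theorem aeval_eq_sum {A : Type} [CommRing A] [Algebra F A] (f : MvPolynomial (Fin n) F)
    (v : Fin n → A) :
    aeval v f = ∑ m ∈ f.support, algebraMap F A (f.coeff m) * ∏ i, v i ^ m i := by
  rw [aeval_def, eval₂_eq']

theorem degree_of_mem {f : MvPolynomial (Fin n) F} {N : ℕ} (hf : f.IsHomogeneous N)
    {m : Fin n →₀ ℕ} (hm : m ∈ f.support) : ∑ i, m i = N := by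
  have := hf (mem_support_iff.mp hm)
  rw [← this, Finsupp.weight_apply, Finsupp.sum_fintype] <;> simp

theorem pencil_top {f : MvPolynomial (Fin n) F} {N : ℕ} (hf : f.IsHomogeneous N)
    (u w : Fin n → R) : TopC (pencil f u w) N (aeval w f) := by
  unfold pencil
  rw [aeval_eq_sum, aeval_eq_sum]
  refine TopC.sum _ _ _ _ fun m hm => ?_
  rw [← zero_add N]
  refine TopC.mul ⟨?_, ?_⟩ ?_
  · rw [IsScalarTower.algebraMap_apply F R (Polynomial R)]; simp
  · rw [IsScalarTower.algebraMap_apply F R (Polynomial R)]; simp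
  · rw [← degree_of_mem hf hm]
    refine TopC.prod _ _ _ _ fun i _ => ?_
    have : TopC (Polynomial.C (u i) + Polynomial.C (w i) * Polynomial.X) 1 (w i) := by
      refine ⟨?_, by simp⟩
      compute_degree
    simpa using this.pow (m i)

/-- total degree bound for a polynomial in two nested variables -/
def BdC (p : Polynomial (Polynomial F)) (N : ℕ) : Prop :=
  ∀ k, p.coeff k ≠ 0 → (p.coeff k).natDegree + k ≤ N

theorem BdC.mul {p p' : Polynomial (Polynomial F)} {N N' : ℕ} (h : BdC p N) (h' : BdC p' N') :
    BdC (p * p') (N + N') := by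
  intro k hk
  have key : (p * p').coeff k ≠ 0 → ((p * p').coeff k).natDegree ≤ N + N' - k ∧ k ≤ N + N' := by
    intro hk
    rw [Polynomial.coeff_mul] at hk ⊢
    constructor
    · refine Polynomial.natDegree_sum_le_of_forall_le _ _ fun x hx => ?_
      rw [Finset.HasAntidiagonal.mem_antidiagonal] at hx
      by_cases h1 : p.coeff x.1 = 0
      · simp [h1]
      by_cases h2 : p'.coeff x.2 = 0
      · simp [h2]
      have := h _ h1
      have := h' _ h2
      refine Polynomial.natDegree_mul_le.trans ?_
      omega
    · obtain ⟨x, hx, hne⟩ := Finset.exists_ne_zero_of_sum_ne_zero hk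
      rw [Finset.HasAntidiagonal.mem_antidiagonal] at hx
      have := h _ (left_ne_zero_of_mul hne)
      have := h' _ (right_ne_zero_of_mul hne)
      omega
  have := key hk
  omega

theorem BdC.one : BdC (1 : Polynomial (Polynomial F)) 0 := by
  intro k hk
  rw [Polynomial.coeff_one] at hk ⊢
  by_cases h : k = 0
  · simp [h]
  · simp [h] at hk

theorem BdC.pow {p : Polynomial (Polynomial F)} {N : ℕ} (h : BdC p N) (m : ℕ) :
    BdC (p ^ m) (m * N) := by
  induction m with
  | zero => simpa using BdC.one
  | succ m ih =>
    rw [pow_succ, Nat.succ_mul]; exact ih.mul h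

theorem BdC.prod {ι : Type} (s : Finset ι) (p : ι → Polynomial (Polynomial F)) (N : ι → ℕ)
    (h : ∀ i ∈ s, BdC (p i) (N i)) : BdC (∏ i ∈ s, p i) (∑ i ∈ s, N i) := by
  classical
  induction s using Finset.induction_on with
  | empty => simpa using BdC.one
  | insert i s hi ih =>
    rw [Finset.prod_insert hi, Finset.sum_insert hi]
    exact (h i (by simp)).mul (ih fun j hj => h j (by simp [hj]))

theorem BdC.sum {ι : Type} (s : Finset ι) (p : ι → Polynomial (Polynomial F)) (N : ℕ)
    (h : ∀ i ∈ s, BdC (p i) N) : BdC (∑ i ∈ s, p i) N := by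
  intro k hk
  rw [Polynomial.finsetSum_coeff] at hk ⊢
  obtain ⟨i, hi, hne⟩ := Finset.exists_ne_zero_of_sum_ne_zero hk
  have h1 := h i hi k hne
  have h2 : (∑ b ∈ s, (p b).coeff k).natDegree ≤ N - k := by
    refine Polynomial.natDegree_sum_le_of_forall_le _ _ fun j hj => ?_
    by_cases h0 : (p j).coeff k = 0
    · simp [h0]
    · have := h j hj k h0
      omega
  omega

theorem pencil_bd {f : MvPolynomial (Fin n) F} {N : ℕ} (hf : f.IsHomogeneous N)
    (u v w : Fin n → F) :
    BdC (pencil f (fun i => Polynomial.C (u i) + Polynomial.C (v i) * Polynomial.X)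
      (fun i => Polynomial.C (w i))) N := by
  unfold pencil
  rw [aeval_eq_sum]
  refine BdC.sum _ _ _ fun m hm => ?_
  rw [← zero_add N]
  refine BdC.mul ?_ ?_
  · rw [IsScalarTower.algebraMap_apply F (Polynomial F) (Polynomial (Polynomial F))]
    intro k hk
    simp only [Polynomial.algebraMap_apply, Algebra.algebraMap_self, RingHom.id_apply,
      Polynomial.coeff_C] at hk ⊢
    by_cases h : k = 0
    · simp [h]
    · simp [h] at hk
  · rw [← degree_of_mem hf hm]
    refine BdC.prod _ _ _ fun i _ => ?_
    have : BdC (Polynomial.C (Polynomial.C (u i) + Polynomial.C (v i) * Polynomial.X) +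
        Polynomial.C (Polynomial.C (w i)) * Polynomial.X) 1 := by
      intro k hk
      rcases k with _ | _ | k
      · simp only [Polynomial.coeff_add, Polynomial.coeff_C_zero, Polynomial.coeff_mul_X_zero,
          add_zero]
        compute_degree
      · simp
      · simp at hk
    simpa using this.pow (m i)

/-- specialization of the nested pencil -/
theorem pencil_nested (f : MvPolynomial (Fin n) F) (u v w : Fin n → F) (k : ℕ) (s : F) :
    ((pencil f (fun i => Polynomial.C (u i) + Polynomial.C (v i) * Polynomial.X)
      (fun i => Polynomial.C (w i))).coeff k).eval s =
      (pencil f (fun i => u i + v i * s) w).coeff k := by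
  have : (pencil f (fun i => Polynomial.C (u i) + Polynomial.C (v i) * Polynomial.X)
      (fun i => Polynomial.C (w i))).map (Polynomial.evalRingHom s) =
      pencil f (fun i => u i + v i * s) w := by
    unfold pencil
    induction f using MvPolynomial.induction_on with
    | C a => simp [Polynomial.algebraMap_apply]
    | add p q hp hq => rw [map_add, Polynomial.map_add, hp, hq, map_add]
    | mul_X p i hp =>
      rw [map_mul, Polynomial.map_mul, hp, map_mul, aeval_X, aeval_X]
      congr 1
      simp
  rw [← this, Polynomial.coeff_map]
  rfl

end Pencil
end

section
section Bezout
variable {F : Type} [Field F]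

theorem finrank_restrictTotalDegree_two (m : ℕ) :
    2 * finrank F (restrictTotalDegree (Fin 2) F m) = (m + 1) * (m + 2) := by
  have e : {s : Fin 2 →₀ ℕ | (s.sum fun _ e => e) ≤ m} ≃
      ((Finset.range (m + 1)).sigma fun i => Finset.range (m + 1 - i) : Finset (Σ _ : ℕ, ℕ)) :=
    { toFun := fun s => ⟨⟨s.1 0, s.1 1⟩, by
        have := s.2
        rw [Set.mem_ofPred_eq, Finsupp.sum_fintype _ _ (fun _ => rfl), Fin.sum_univ_two] at this
        simp only [Finset.mem_sigma, Finset.mem_range]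
        omega⟩
      invFun := fun x => ⟨Finsupp.equivFunOnFinite.symm ![x.1.1, x.1.2], by
        have := x.2
        simp only [Finset.mem_sigma, Finset.mem_range] at this
        rw [Set.mem_ofPred_eq, Finsupp.sum_fintype _ _ (fun _ => rfl), Fin.sum_univ_two]
        simp
        omega⟩
      left_inv := fun s => by
        ext i
        fin_cases i <;> simp
      right_inv := fun x => by
        ext <;> simp }
  have h1 : finrank F (restrictTotalDegree (Fin 2) F m) =
      ∑ i ∈ Finset.range (m + 1), (m + 1 - i) := by
    have := finrank_eq_nat_card_basis
      (basisRestrictSupport F {s : Fin 2 →₀ ℕ | (s.sum fun _ e => e) ≤ m})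
    rw [Nat.card_congr e] at this
    rw [restrictTotalDegree, this]
    rw [Nat.card_eq_fintype_card, Fintype.card_coe, Finset.card_sigma]
    simp
  rw [h1]
  clear h1 e
  have h2 : ∑ i ∈ Finset.range (m + 1), (m + 1 - i) = ∑ i ∈ Finset.range (m + 1), (i + 1) := by
    rw [← Finset.sum_range_reflect]
    refine Finset.sum_congr rfl fun i hi => ?_
    rw [Finset.mem_range] at hi
    omega
  rw [h2]
  induction m with
  | zero => simp
  | succ m ih =>
    rw [Finset.sum_range_succ, mul_add, ih]
    · ring
    · rw [← Finset.sum_range_reflect]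
      refine Finset.sum_congr rfl fun i hi => ?_
      rw [Finset.mem_range] at hi
      omega

theorem bezout_finrank {g h : MvPolynomial (Fin 2) F} (hg : Prime g) (hgh : ¬ g ∣ h) {d e : ℕ}
    (hd : g.totalDegree = d) (he : h.totalDegree ≤ e) {M : Type} [AddCommGroup M] [Module F M]
    [FiniteDimensional F M] (Φ : MvPolynomial (Fin 2) F →ₗ[F] M) (hΦ : Function.Surjective Φ)
    (h1 : ∀ a, Φ (g * a) = 0) (h2 : ∀ a, Φ (h * a) = 0) : finrank F M ≤ d * e := by
  classical
  have hg0 : g ≠ 0 := hg.ne_zero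
  -- a degree where Φ is already surjective
  obtain ⟨M0, hM0⟩ : ∃ M0, ∀ y : M, ∃ p : MvPolynomial (Fin 2) F, p.totalDegree ≤ M0 ∧ Φ p = y := by
    let b := Module.finBasis F M
    choose pr hpr using fun i => hΦ (b i)
    refine ⟨Finset.univ.sup fun i => (pr i).totalDegree, fun y => ?_⟩
    refine ⟨∑ i, C (b.repr y i) * pr i, ?_, ?_⟩
    · refine totalDegree_finsetSum_le fun i _ => ?_
      refine (totalDegree_mul _ _).trans ?_
      rw [totalDegree_C, zero_add]
      exact Finset.le_sup (f := fun i => (pr i).totalDegree) (Finset.mem_univ i)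
    · rw [map_sum]
      conv_rhs => rw [← b.sum_repr y]
      refine Finset.sum_congr rfl fun i _ => ?_
      rw [← smul_eq_C_mul, map_smul, hpr]
  let c := M0
  let R : ℕ → Submodule F (MvPolynomial (Fin 2) F) := fun m => restrictTotalDegree (Fin 2) F m
  have memR : ∀ m p, p ∈ R m ↔ p.totalDegree ≤ m := fun m p => mem_restrictTotalDegree _ _ _
  -- ψ : R (c + e) × R (c + d) → R (c + d + e)
  let mg : MvPolynomial (Fin 2) F →ₗ[F] MvPolynomial (Fin 2) F := LinearMap.mulLeft F g
  let mh : MvPolynomial (Fin 2) F →ₗ[F] MvPolynomial (Fin 2) F := LinearMap.mulLeft F h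
  let ψ0 : (R (c + e) × R (c + d)) →ₗ[F] MvPolynomial (Fin 2) F :=
    (mg.comp (R (c + e)).subtype).coprod (mh.comp (R (c + d)).subtype)
  have hψ0 : ∀ x, ψ0 x = g * x.1 + h * x.2 := fun x => rfl
  have hψmem : ∀ x, ψ0 x ∈ R (c + d + e) := by
    intro x
    rw [memR, hψ0]
    have ha := (memR _ _).1 x.1.2
    have hb := (memR _ _).1 x.2.2
    refine (totalDegree_add _ _).trans (max_le ?_ ?_)
    · refine (totalDegree_mul _ _).trans ?_
      omega
    · refine (totalDegree_mul _ _).trans ?_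
      omega
  let ψ : (R (c + e) × R (c + d)) →ₗ[F] R (c + d + e) := ψ0.codRestrict _ hψmem
  let Φ' : R (c + d + e) →ₗ[F] M := Φ.comp (R (c + d + e)).subtype
  have hΦ' : Function.Surjective Φ' := by
    intro y
    obtain ⟨p, hp, hpy⟩ := hM0 y
    exact ⟨⟨p, (memR _ _).2 (by omega)⟩, hpy⟩
  have hle : LinearMap.range ψ ≤ LinearMap.ker Φ' := by
    rintro _ ⟨x, rfl⟩
    rw [LinearMap.mem_ker]
    change Φ (ψ0 x) = 0
    rw [hψ0, map_add, h1, h2, add_zero]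
  -- kernel of ψ
  let κ0 : R c →ₗ[F] (MvPolynomial (Fin 2) F × MvPolynomial (Fin 2) F) :=
    (mh.comp (R c).subtype).prod (-(mg.comp (R c).subtype))
  let κ1 : R c →ₗ[F] R (c + e) := (mh.comp (R c).subtype).codRestrict _ (by
    intro x
    rw [memR]
    have ha := (memR _ _).1 x.2
    refine (totalDegree_mul _ _).trans ?_
    simp only [Submodule.coe_subtype]
    omega)
  let κ2 : R c →ₗ[F] R (c + d) := (mg.comp (R c).subtype).codRestrict _ (by
    intro x
    rw [memR]
    have ha := (memR _ _).1 x.2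
    refine (totalDegree_mul _ _).trans ?_
    simp only [Submodule.coe_subtype]
    omega)
  let κ : R c →ₗ[F] (R (c + e) × R (c + d)) := κ1.prod (-κ2)
  have hker : LinearMap.ker ψ ≤ LinearMap.range κ := by
    rintro ⟨a, b⟩ hx
    rw [LinearMap.mem_ker] at hx
    have hx' : g * (a : MvPolynomial (Fin 2) F) + h * b = 0 := congrArg Subtype.val hx
    have hdvd : g ∣ h * (b : MvPolynomial (Fin 2) F) :=
      ⟨-a, by linear_combination hx'⟩
    obtain ⟨k, hk⟩ := (hg.dvd_or_dvd hdvd).resolve_left hgh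
    have hkdeg : k.totalDegree ≤ c := by
      by_cases hk0 : k = 0
      · simp [hk0]
      have hb := (memR _ _).1 b.2
      rw [hk, totalDegree_mul_of_isDomain hg0 hk0] at hb
      omega
    refine ⟨⟨-k, (memR _ _).2 (by rwa [totalDegree_neg])⟩, ?_⟩
    refine Prod.ext (Subtype.ext ?_) (Subtype.ext ?_)
    · change h * (-k) = a
      apply mul_left_cancel₀ hg0
      rw [hk] at hx'
      linear_combination -hx'
    · change -(g * (-k)) = b
      rw [hk]; ring
  have d1 := LinearMap.finrank_range_add_finrank_ker ψ
  have d2 := LinearMap.finrank_range_add_finrank_ker Φ'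
  have d3 := Submodule.finrank_mono hle
  have d4 := (Submodule.finrank_mono hker).trans (LinearMap.finrank_range_le κ)
  rw [LinearMap.range_eq_top.2 hΦ', finrank_top] at d2
  rw [Module.finrank_prod] at d1
  have e1 := finrank_restrictTotalDegree_two (F := F) c
  have e2 := finrank_restrictTotalDegree_two (F := F) (c + e)
  have e3 := finrank_restrictTotalDegree_two (F := F) (c + d)
  have e4 := finrank_restrictTotalDegree_two (F := F) (c + d + e)
  change 2 * finrank F (R c) = _ at e1
  change 2 * finrank F (R (c + e)) = _ at e2
  change 2 * finrank F (R (c + d)) = _ at e3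
  change 2 * finrank F (R (c + d + e)) = _ at e4
  nlinarith

end Bezout
end

section
section Count
open Classical in
theorem lines_through {F A : Type} [Field F] [Fintype F] [AddCommGroup A] [Module F A] [Fintype A]
    (P : A → Prop) (x0 : A) (m : ℕ)
    (h : ∀ d : A, d ≠ 0 → (Finset.univ.filter fun t : F => t ≠ 0 ∧ P (x0 + t • d)).card ≤ m) :
    (Fintype.card F - 1) * (Finset.univ.filter fun x : A => x ≠ x0 ∧ P x).card ≤
      (Fintype.card A - 1) * m := by
  have h1 : ∑ d ∈ Finset.univ.filter (fun d : A => d ≠ 0),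
      (Finset.univ.filter fun t : F => t ≠ 0 ∧ P (x0 + t • d)).card =
      ∑ t ∈ Finset.univ.filter (fun t : F => t ≠ 0),
      (Finset.univ.filter fun d : A => d ≠ 0 ∧ P (x0 + t • d)).card := by
    simp only [Finset.card_filter, Finset.sum_filter]
    simp only [ite_and]
    have : ∀ (c : Prop) [Decidable c] (ι : Type) (s : Finset ι) (f : ι → ℕ),
      (if c then ∑ i ∈ s, f i else 0) = ∑ i ∈ s, if c then f i else 0 := by
      intro c _ ι s f; split_ifs <;> simp
    simp only [this]
    rw [Finset.sum_comm]
    refine Finset.sum_congr rfl fun t _ => Finset.sum_congr rfl fun d _ => ?_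
    split_ifs <;> rfl
  have h2 : ∀ t ∈ Finset.univ.filter (fun t : F => t ≠ 0),
      (Finset.univ.filter fun d : A => d ≠ 0 ∧ P (x0 + t • d)).card =
      (Finset.univ.filter fun x : A => x ≠ x0 ∧ P x).card := by
    intro t ht
    have ht0 : t ≠ 0 := by simpa using ht
    refine Finset.card_bij (fun d _ => x0 + t • d) ?_ ?_ ?_
    · intro d hd
      simp only [Finset.mem_filter, Finset.mem_univ, true_and] at hd ⊢
      refine ⟨?_, hd.2⟩
      intro h; apply hd.1
      simpa [ht0] using h
    · intro d _ d' _ h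
      simpa [ht0] using h
    · intro x hx
      simp only [Finset.mem_filter, Finset.mem_univ, true_and] at hx
      have hh : x0 + t • (t⁻¹ • (x - x0)) = x := by
        rw [smul_smul, mul_inv_cancel₀ ht0, one_smul]; abel
      refine ⟨t⁻¹ • (x - x0), ?_, hh⟩
      simp only [Finset.mem_filter, Finset.mem_univ, true_and]
      refine ⟨?_, by rw [hh]; exact hx.2⟩
      simp [ht0, sub_eq_zero, hx.1]
  have h3 : ∀ (B : Type) [Fintype B] [Zero B],
      (Finset.univ.filter (fun t : B => t ≠ 0)).card = Fintype.card B - 1 := by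
    intro B _ _
    rw [Finset.filter_ne' Finset.univ (0 : B), Finset.card_erase_of_mem (Finset.mem_univ _)]; rfl
  have h4 := Finset.sum_le_card_nsmul (Finset.univ.filter (fun d : A => d ≠ 0)) _ m
    (fun d hd => h d (by simpa using hd))
  rw [h1, Finset.sum_congr rfl h2, Finset.sum_const, h3, h3, smul_eq_mul, smul_eq_mul] at h4
  exact h4

open Classical in
theorem double_count {A I : Type} [AddCommGroup A] [Fintype A] [Fintype I] (w : I → A)
    (P : A → Prop) :
    ∑ v : A, (Finset.univ.filter fun i => P (v + w i)).card =
      Fintype.card I * (Finset.univ.filter fun v => P v).card := by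
  simp only [Finset.card_filter]
  rw [Finset.sum_comm]
  have : ∀ i : I, ∑ v : A, (if P (v + w i) then 1 else 0) = ∑ v : A, if P v then 1 else 0 := by
    intro i
    exact Fintype.sum_equiv (Equiv.addRight (w i)) _ _ (fun v => rfl)
  rw [Finset.sum_congr rfl fun i _ => this i, Finset.sum_const, smul_eq_mul]
  rfl

end Count

section Curve
variable {F : Type} [Field F] {n : ℕ}

/-- substitution of an affine plane -/
noncomputable def subst2 (v : Fin n → F) (e : Fin 2 → Fin n → F) :
    MvPolynomial (Fin n) F →ₐ[F] MvPolynomial (Fin 2) F :=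
  aeval (fun j => C (v j) + ∑ i, C (e i j) * X i)

theorem aeval_subst2 {A : Type} [CommRing A] [Algebra F A] (v : Fin n → F) (e : Fin 2 → Fin n → F)
    (y : Fin 2 → A) (f : MvPolynomial (Fin n) F) :
    aeval y (subst2 v e f) =
      aeval (fun j => algebraMap F A (v j) + ∑ i, algebraMap F A (e i j) * y i) f := by
  unfold subst2
  rw [← AlgHom.comp_apply, comp_aeval]
  congr 2
  ext j
  simp

theorem pderiv_subst2 (v : Fin n → F) (e : Fin 2 → Fin n → F) (f : MvPolynomial (Fin n) F)
    (i : Fin 2) : pderiv i (subst2 v e f) = ∑ j, subst2 v e (pderiv j f) * C (e i j) := by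
  unfold subst2
  rw [deriv_aeval]
  refine Finset.sum_congr rfl fun j _ => ?_
  congr 1
  fin_cases i <;> simp [Derivation.leibniz, pderiv_X]

theorem totalDegree_subst2_le (v : Fin n → F) (e : Fin 2 → Fin n → F) {f : MvPolynomial (Fin n) F}
    {N : ℕ} (hf : f.IsHomogeneous N) : (subst2 v e f).totalDegree ≤ N := by
  unfold subst2
  rw [aeval_eq_sum]
  refine totalDegree_finsetSum_le fun m hm => ?_
  refine (totalDegree_mul _ _).trans ?_
  rw [algebraMap_eq, totalDegree_C, zero_add]
  refine (totalDegree_finsetProd _ _).trans ?_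
  rw [← degree_of_mem hf hm]
  refine Finset.sum_le_sum fun j _ => ?_
  refine (totalDegree_pow _ _).trans ?_
  have : (C (v j) + ∑ i, C (e i j) * X i : MvPolynomial (Fin 2) F).totalDegree ≤ 1 := by
    refine (totalDegree_add _ _).trans (max_le (by simp) ?_)
    refine totalDegree_finsetSum_le fun i _ => ?_
    refine (totalDegree_mul _ _).trans ?_
    simp
  calc _ ≤ m j * 1 := Nat.mul_le_mul_left _ this
    _ = m j := mul_one _

theorem natDegree_pencil_le (g : MvPolynomial (Fin n) F) (u w : Fin n → F) :
    (pencil g u w).natDegree ≤ g.totalDegree := by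
  unfold pencil
  rw [aeval_eq_sum]
  refine Polynomial.natDegree_sum_le_of_forall_le _ _ fun m hm => ?_
  refine Polynomial.natDegree_mul_le.trans ?_
  rw [Polynomial.algebraMap_apply, Polynomial.natDegree_C, zero_add]
  refine (Polynomial.natDegree_prod_le _ _).trans ?_
  have h1 := le_totalDegree hm
  rw [Finsupp.sum_fintype _ _ (fun _ => rfl)] at h1
  refine le_trans (Finset.sum_le_sum fun i _ => ?_) h1
  refine Polynomial.natDegree_pow_le.trans ?_
  have : (Polynomial.C (u i) + Polynomial.C (w i) * Polynomial.X).natDegree ≤ 1 := by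
    compute_degree
  calc _ ≤ m i * 1 := Nat.mul_le_mul_left _ this
    _ = m i := mul_one _

theorem pencil_subst2 (v : Fin n → F) (e : Fin 2 → Fin n → F) (f : MvPolynomial (Fin n) F)
    (P d : Fin 2 → F) : pencil (subst2 v e f) P d =
      pencil f (fun j => v j + ∑ i, e i j * P i) (fun j => ∑ i, e i j * d i) := by
  unfold pencil
  rw [aeval_subst2]
  congr 2
  ext1 j
  simp only [Polynomial.algebraMap_apply, Algebra.algebraMap_self, RingHom.id_apply,
    Fin.sum_univ_two, Polynomial.C_add, Polynomial.C_mul]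
  ring

variable [Fintype F]

open Classical in
theorem count_factor (g : MvPolynomial (Fin 2) F) (D : ℕ) (hD : g.totalDegree ≤ D) (hD1 : 1 ≤ D)
    (h : ∀ P d : Fin 2 → F, d ≠ 0 → pencil g P d ≠ 0) :
    (Finset.univ.filter fun s : Fin 2 → F => aeval s g = 0).card ≤
      1 + (Fintype.card F + 1) * (D - 1) := by
  by_cases hne : ∃ P : Fin 2 → F, aeval P g = 0
  swap
  · push Not at hne
    rw [Finset.filter_false_of_mem (fun s _ => hne s)]; simp
  obtain ⟨P, hP⟩ := hne
  have key := lines_through (F := F) (fun s : Fin 2 → F => aeval s g = 0) P (D - 1) (by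
    intro d hd
    have h0 := h P d hd
    have hsub : insert (0 : F) (Finset.univ.filter fun t : F => t ≠ 0 ∧ aeval (P + t • d) g = 0)
        ⊆ (pencil g P d).roots.toFinset := by
      intro t ht
      rw [Multiset.mem_toFinset, Polynomial.mem_roots h0, Polynomial.IsRoot, pencil_eval]
      rw [Finset.mem_insert] at ht
      rcases ht with rfl | ht
      · simpa using hP
      · have := (Finset.mem_filter.1 ht).2.2
        rw [← this]
        congr 2; ext i; simp [mul_comm]
    have h1 := Finset.card_le_card hsub
    rw [Finset.card_insert_of_notMem (fun h => (Finset.mem_filter.1 h).2.1 rfl)] at h1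
    have h2 := Multiset.toFinset_card_le (pencil g P d).roots
    have h3 := Polynomial.card_roots' (pencil g P d)
    have h4 := natDegree_pencil_le g P d
    omega)
  have h5 : Finset.univ.filter (fun s : Fin 2 → F => aeval s g = 0) =
      insert P (Finset.univ.filter fun s : Fin 2 → F => s ≠ P ∧ aeval s g = 0) := by
    ext s
    simp only [Finset.mem_filter, Finset.mem_univ, true_and, Finset.mem_insert]
    by_cases hs : s = P
    · simp [hs, hP]
    · simp [hs]
  rw [h5, Finset.card_insert_of_notMem (fun h => (Finset.mem_filter.1 h).2.1 rfl), add_comm]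
  gcongr
  have hQ : 1 < Fintype.card F := Fintype.one_lt_card
  obtain ⟨r, hr⟩ : ∃ r, Fintype.card F = r + 2 := ⟨Fintype.card F - 2, by omega⟩
  have hc : Fintype.card (Fin 2 → F) - 1 = (r + 1) * (r + 3) := by
    rw [Fintype.card_fun, Fintype.card_fin, hr]
    have : (r + 2) ^ 2 = (r + 1) * (r + 3) + 1 := by ring
    omega
  rw [hc, hr] at key
  rw [hr]
  have e1 : r + 2 - 1 = r + 1 := by omega
  rw [e1, mul_assoc] at key
  have key2 := Nat.le_of_mul_le_mul_left key (Nat.succ_pos r)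
  refine le_trans (le_of_eq ?_) key2
  congr!

/-- no divisibility, by looking at infinity -/
theorem not_dvd_h {q : ℕ} (hcard : Fintype.card F = q ^ 2) (hqF : (q : F) = 0) (hq : 2 < q)
    {f : MvPolynomial (Fin n) F} (hf : f.IsHomogeneous (q + 1)) (v : Fin n → F)
    (e : Fin 2 → Fin n → F)
    (hext : ∀ s : Fin 2 → F, s ≠ 0 → aeval (fun j => ∑ i, e i j * s i) f ≠ 0) :
    ¬ subst2 v e f ∣ ∑ i, (X i ^ (q ^ 2) - X i) * pderiv i (subst2 v e f) := by
  intro hdvd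
  let θ : MvPolynomial (Fin 2) F →ₐ[F] Polynomial (Polynomial F) :=
    aeval ![Polynomial.C Polynomial.X * Polynomial.X, Polynomial.X]
  let w : Fin n → Polynomial F :=
    fun j => Polynomial.C (e 1 j) + Polynomial.C (e 0 j) * Polynomial.X
  have hθ : ∀ p : MvPolynomial (Fin n) F, θ (subst2 v e p) =
      pencil p (fun j => Polynomial.C (v j)) w := by
    intro p
    change aeval _ _ = aeval _ _
    rw [aeval_subst2]
    congr 2
    ext1 j
    simp only [Polynomial.algebraMap_apply, Algebra.algebraMap_self, RingHom.id_apply,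
      Fin.sum_univ_two, w, Polynomial.C_add, Polynomial.C_mul, Matrix.cons_val_zero,
      Matrix.cons_val_one]
    ring
  set γ : Polynomial F := pencil f (e 1) (e 0) with hγ
  have hγw : aeval w f = γ := rfl
  have hγtop : TopC γ (q + 1) (aeval (e 0) f) := pencil_top hf _ _
  have he0 : aeval (e 0) f ≠ 0 := by
    have := hext ![1, 0] (by intro h; simpa using congrFun h 0)
    simpa using this
  have hγ0 : γ ≠ 0 := by
    intro h; apply he0; rw [← hγtop.2, h]; simp
  have hroot : ∀ a : F, ¬ γ.IsRoot a := by
    intro a ha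
    rw [Polynomial.IsRoot, hγ, pencil_eval] at ha
    apply hext ![a, 1] (by intro h; simpa using congrFun h 1)
    rw [← ha]
    congr 2; ext j; simp [Fin.sum_univ_two]; ring
  have hder : Polynomial.derivative γ = ∑ j, aeval w (pderiv j f) * Polynomial.C (e 0 j) := by
    rw [hγ, pencil_derivative]; rfl
  have heuler : ∑ j, aeval w (pderiv j f) * w j = γ := by
    have h1 := hf.sum_X_mul_pderiv
    have h2 := congrArg (aeval w) h1
    rw [map_sum, map_nsmul, hγw] at h2
    rw [nsmul_eq_mul, Nat.cast_add, Nat.cast_one] at h2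
    have h3 : ((q : ℕ) : Polynomial F) = 0 := by
      rw [← Polynomial.C_eq_natCast, hqF, Polynomial.C_0]
    rw [h3, zero_add, one_mul] at h2
    rw [← h2]
    refine Finset.sum_congr rfl fun j _ => ?_
    rw [map_mul, aeval_X, mul_comm]
  have hsum1 : ∑ j, aeval w (pderiv j f) * Polynomial.C (e 1 j) =
      γ - Polynomial.X * Polynomial.derivative γ := by
    rw [hder, Finset.mul_sum]
    conv_rhs => rw [← heuler]
    rw [← Finset.sum_sub_distrib]
    refine Finset.sum_congr rfl fun j _ => ?_
    simp only [w]; ring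
  -- top of θ (pderiv i g)
  have htop : ∀ i, TopC (θ (pderiv i (subst2 v e f))) q
      (∑ j, aeval w (pderiv j f) * Polynomial.C (e i j)) := by
    intro i
    rw [pderiv_subst2, map_sum]
    refine TopC.sum _ _ _ _ fun j _ => ?_
    rw [map_mul, hθ]
    have hc : θ (C (e i j)) = Polynomial.C (Polynomial.C (e i j)) := by
      change aeval _ _ = _
      rw [aeval_C]; rfl
    rw [hc]
    have h2 : (pderiv j f).IsHomogeneous q := by simpa using hf.pderiv (i := j)
    have := TopC.mul (pencil_top h2 (fun j => Polynomial.C (v j)) w)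
      (⟨by simp, by simp⟩ : TopC (Polynomial.C (Polynomial.C (e i j))) 0 (Polynomial.C (e i j)))
    simpa using this
  have hQ2 : 1 < q ^ 2 := by nlinarith
  have hθh : TopC (θ (∑ i, (X i ^ (q ^ 2) - X i) * pderiv i (subst2 v e f))) (q ^ 2 + q)
      ((Polynomial.X ^ (q ^ 2) - Polynomial.X) * Polynomial.derivative γ + γ) := by
    rw [map_sum, Fin.sum_univ_two]
    have a0 : TopC (θ (X 0 ^ (q ^ 2) - X 0)) (q ^ 2) (Polynomial.X ^ (q ^ 2)) := by
      rw [map_sub, map_pow]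
      simp only [θ, aeval_X, Matrix.cons_val_zero]
      rw [mul_pow, ← Polynomial.C_pow]
      constructor
      · refine (Polynomial.natDegree_sub_le _ _).trans (max_le ?_ ?_)
        · exact Polynomial.natDegree_C_mul_X_pow_le _ _
        · refine Polynomial.natDegree_mul_le.trans ?_
          rw [Polynomial.natDegree_C, Polynomial.natDegree_X]; omega
      · rw [Polynomial.coeff_sub, Polynomial.coeff_C_mul_X_pow, Polynomial.coeff_C_mul_X]
        rw [if_pos rfl, if_neg hQ2.ne', sub_zero]
    have a1 : TopC (θ (X 1 ^ (q ^ 2) - X 1)) (q ^ 2) 1 := by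
      rw [map_sub, map_pow]
      simp only [θ, aeval_X, Matrix.cons_val_one, Matrix.cons_val_zero]
      constructor
      · refine (Polynomial.natDegree_sub_le _ _).trans (max_le ?_ ?_)
        · simp
        · exact Polynomial.natDegree_X_le.trans hQ2.le
      · rw [Polynomial.coeff_sub, Polynomial.coeff_X_pow, Polynomial.coeff_X]
        rw [if_pos rfl, if_neg hQ2.ne, sub_zero]
    have b0 := a0.mul (htop 0)
    have b1 := a1.mul (htop 1)
    rw [map_mul, map_mul]
    refine ⟨Polynomial.natDegree_add_le_of_degree_le b0.1 b1.1, ?_⟩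
    rw [Polynomial.coeff_add, b0.2, b1.2, ← hder, hsum1]
    ring
  have hθg : TopC (θ (subst2 v e f)) (q + 1) γ := by
    rw [hθ, ← hγw]; exact pencil_top hf _ _
  obtain ⟨k, hk⟩ := hdvd
  have hk' := congrArg θ hk
  rw [map_mul] at hk'
  rw [hk'] at hθh
  have hg0 : θ (subst2 v e f) ≠ 0 := by
    intro h; apply hγ0; rw [← hθg.2, h]; simp
  have hgd : (θ (subst2 v e f)).natDegree = q + 1 :=
    Polynomial.natDegree_eq_of_le_of_coeff_ne_zero hθg.1 (by rw [hθg.2]; exact hγ0)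
  have hkd : (θ k).natDegree ≤ q ^ 2 - 1 := by
    by_cases h0 : θ k = 0
    · simp [h0]
    have := hθh.1
    rw [Polynomial.natDegree_mul hg0 h0, hgd] at this
    omega
  have hdv : γ ∣ (Polynomial.X ^ (q ^ 2) - Polynomial.X) * Polynomial.derivative γ + γ := by
    rw [← hθh.2, show q ^ 2 + q = (q + 1) + (q ^ 2 - 1) by omega,
      Polynomial.coeff_mul_add_eq_of_natDegree_le hθg.1 hkd, hθg.2]
    exact dvd_mul_right _ _
  have hdv2 : γ ∣ (Polynomial.X ^ (q ^ 2) - Polynomial.X) * Polynomial.derivative γ :=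
    (dvd_add_left dvd_rfl).1 hdv
  have hcop : IsCoprime γ (Polynomial.X ^ (q ^ 2) - Polynomial.X) := by
    have hprod : ∏ a : F, (Polynomial.X - Polynomial.C a) =
        Polynomial.X ^ (q ^ 2) - Polynomial.X := by
      have h1 := Polynomial.prod_multiset_X_sub_C_of_monic_of_roots_card_eq
        (p := Polynomial.X ^ (Fintype.card F) - (Polynomial.X : Polynomial F))
        (Polynomial.monic_X_pow_sub (by
          rw [Polynomial.degree_X, hcard]; exact_mod_cast hQ2)) (by
          rw [FiniteField.roots_X_pow_card_sub_X,
            FiniteField.X_pow_card_sub_X_natDegree_eq _ Fintype.one_lt_card]; rfl)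
      rw [FiniteField.roots_X_pow_card_sub_X, hcard] at h1
      exact h1
    rw [← hprod]
    refine IsCoprime.prod_right fun a _ => ?_
    refine IsCoprime.symm ?_
    refine ((Polynomial.irreducible_X_sub_C a).coprime_iff_not_dvd).2 ?_
    rw [Polynomial.dvd_iff_isRoot]
    exact hroot a
  have hdv3 := hcop.dvd_of_dvd_mul_left hdv2
  have hz : Polynomial.derivative γ = 0 := by
    by_contra hne
    have h1 := Polynomial.natDegree_le_of_dvd hdv3 hne
    have h2 := Polynomial.natDegree_derivative_lt (p := γ) (by
      rw [Polynomial.natDegree_eq_of_le_of_coeff_ne_zero hγtop.1 (by rw [hγtop.2]; exact he0)]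
      omega)
    omega
  have := congrArg (fun p => Polynomial.coeff p q) hz
  simp only [Polynomial.coeff_derivative, hγtop.2, hqF, zero_add, mul_one,
    Polynomial.coeff_zero] at this
  exact he0 this

open Classical in
theorem count_irred {q : ℕ} (hcard : Fintype.card F = q ^ 2) (hqF : (q : F) = 0)
    {g : MvPolynomial (Fin 2) F} (hg : Prime g) {d e : ℕ} (hd : g.totalDegree = d)
    (hgh : ¬ g ∣ ∑ i, (X i ^ (q ^ 2) - X i) * pderiv i g)
    (he : (∑ i, (X i ^ (q ^ 2) - X i) * pderiv i g).totalDegree ≤ e) :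
    (Finset.univ.filter fun s : Fin 2 → F => aeval s g = 0).card * 2 ≤ d * e := by
  set T := Finset.univ.filter fun s : Fin 2 → F => aeval s g = 0 with hT
  have htau : ∀ P : Fin 2 → F, ∃ τ : Fin 2 → F, τ ≠ 0 ∧ ∑ i, aeval P (pderiv i g) * τ i = 0 := by
    intro P
    by_cases h : aeval P (pderiv 1 g) = 0
    · refine ⟨![0, 1], ?_, ?_⟩
      · intro h; simpa using congrFun h 1
      · simp [Fin.sum_univ_two, h, -aeval_eq_eval]
    · refine ⟨![aeval P (pderiv 1 g), - aeval P (pderiv 0 g)], ?_, ?_⟩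
      · intro h'; apply h; simpa using congrFun h' 0
      · simp [Fin.sum_univ_two]; ring
  choose τ hτ0 hτ using htau
  let D : (Fin 2 → F) → Derivation F (MvPolynomial (Fin 2) F) (MvPolynomial (Fin 2) F) :=
    fun P => mkDerivation F (fun i => C (τ P i))
  have hDX : ∀ P i, D P (X i) = C (τ P i) := fun P i => mkDerivation_X _ _ _
  have hDg : ∀ P p, D P p = ∑ i, pderiv i p * C (τ P i) := by
    intro P p
    have := deriv_aeval (D P) X p
    simpa only [aeval_X_left_apply, hDX] using this
  let Φ : MvPolynomial (Fin 2) F →ₗ[F] (T → F × F) :=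
    LinearMap.pi fun P => ((aeval (P : Fin 2 → F)).toLinearMap).prod
      ((aeval (P : Fin 2 → F)).toLinearMap.comp (D P).toLinearMap)
  have hΦ : ∀ p P, Φ p P = (aeval (P : Fin 2 → F) p, aeval (P : Fin 2 → F) (D P p)) :=
    fun p P => rfl
  have hzero : ∀ k : MvPolynomial (Fin 2) F, (∀ P : T, aeval (P : Fin 2 → F) k = 0 ∧
      aeval (P : Fin 2 → F) (D P k) = 0) → ∀ a, Φ (k * a) = 0 := by
    intro k hk a
    funext P
    rw [hΦ, Derivation.leibniz]
    simp [(hk P).1, (hk P).2, -aeval_eq_eval]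
  have hQF : ((q : F)) ^ 2 = 0 := by rw [hqF]; ring_nf
  have hDQ : ∀ P i, D P (X i ^ (q ^ 2) - X i) = - C (τ P i) := by
    intro P i
    rw [map_sub, Derivation.leibniz_pow, hDX]
    have : ((q ^ 2 : ℕ) : MvPolynomial (Fin 2) F) = 0 := by
      rw [← C_eq_coe_nat, Nat.cast_pow, hQF, C_0]
    rw [nsmul_eq_mul, this]; simp
  have hDgT : ∀ P : T, aeval (P : Fin 2 → F) (D P g) = 0 := by
    intro P
    rw [hDg, map_sum, ← hτ P]
    refine Finset.sum_congr rfl fun i _ => ?_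
    rw [map_mul, aeval_C]; rfl
  have hfix : ∀ (P : Fin 2 → F) i, aeval P (X i ^ (q ^ 2) - X i : MvPolynomial (Fin 2) F) = 0 := by
    intro P i
    rw [map_sub, map_pow, aeval_X, ← hcard, FiniteField.pow_card, sub_self]
  have hsurj : Function.Surjective Φ := by
    rw [← LinearMap.range_eq_top, eq_top_iff]
    intro y _
    have : y = ∑ P, Pi.single P (y P) := (Finset.univ_sum_single y).symm
    rw [this]
    refine Submodule.sum_mem _ fun P _ => ?_
    obtain ⟨ℓ, hℓ0, hℓ1⟩ : ∃ ℓ : MvPolynomial (Fin 2) F, aeval (P : Fin 2 → F) ℓ = 0 ∧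
        aeval (P : Fin 2 → F) (D P ℓ) = 1 := by
      obtain ⟨i, hi⟩ := Function.ne_iff.1 (hτ0 P)
      refine ⟨C (τ P i)⁻¹ * (X i - C (P.1 i)), by simp, ?_⟩
      rw [Derivation.leibniz]
      have : D P (C (P.1 i)) = 0 := by rw [← algebraMap_eq]; simp
      have h2 : D P (C (τ P i)⁻¹) = 0 := by rw [← algebraMap_eq]; simp
      rw [h2, map_sub, hDX, this]
      have hi' : τ P i ≠ 0 := hi
      simp [hi']
    set δ := indicator (P : Fin 2 → F) with hδ
    have hδ1 : aeval (P : Fin 2 → F) δ = 1 := by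
      rw [aeval_eq_eval]; exact eval_indicator_apply_eq_one _
    have hδ2 : ∀ P' : T, P' ≠ P → aeval (P' : Fin 2 → F) δ = 0 := by
      intro P' h
      rw [aeval_eq_eval]
      exact eval_indicator_apply_eq_zero _ _ (fun h' => h (Subtype.ext h'))
    refine ⟨δ ^ 2 * (C (y P).1 + C ((y P).2 -
      (y P).1 * aeval (P : Fin 2 → F) (D P (δ ^ 2))) * ℓ), ?_⟩
    funext P'
    rw [hΦ]
    have hC : ∀ a, D P' (C a) = 0 := by intro a; rw [← algebraMap_eq]; simp
    by_cases h : P' = P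
    · subst h
      rw [Pi.single_eq_same, Derivation.leibniz, map_add (D P'), Derivation.leibniz (D P') (C _) ℓ,
        hC, hC]
      simp only [map_mul, map_pow, map_add, hδ1, hℓ0, hℓ1, smul_eq_mul, aeval_C]
      ext <;> simp
    · rw [Pi.single_eq_of_ne h, Derivation.leibniz]
      simp [hδ2 P' h, Derivation.leibniz_pow, -aeval_eq_eval]
  have hgmem : ∀ P : T, aeval (P : Fin 2 → F) g = 0 := fun P => (Finset.mem_filter.1 P.2).2
  have := bezout_finrank hg hgh hd he Φ hsurj (hzero g fun P => ⟨hgmem P, hDgT P⟩)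
    (hzero _ fun P => ⟨by
      rw [map_sum]
      refine Finset.sum_eq_zero fun i _ => ?_
      rw [map_mul, hfix, zero_mul], by
      rw [map_sum, map_sum]
      rw [← neg_eq_zero, ← hDgT P, hDg P g, map_sum, ← Finset.sum_neg_distrib]
      refine Finset.sum_congr rfl fun i _ => ?_
      rw [Derivation.leibniz, hDQ, map_add, smul_eq_mul, smul_eq_mul, map_mul, hfix]
      simp⟩)
  rw [Module.finrank_pi_fintype] at this
  simpa using this

open Classical in
theorem curve_bound {q : ℕ} (hcard : Fintype.card F = q ^ 2) (hqF : (q : F) = 0) (hq : 2 < q)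
    {f : MvPolynomial (Fin n) F} (hf : f.IsHomogeneous (q + 1)) (v : Fin n → F)
    (e : Fin 2 → Fin n → F)
    (hext : ∀ s : Fin 2 → F, s ≠ 0 → aeval (fun j => ∑ i, e i j * s i) f ≠ 0) :
    (Finset.univ.filter fun s : Fin 2 → F => aeval (fun j => v j + ∑ i, e i j * s i) f = 0).card
      + 1 ≤ q ^ 3 := by
  set g := subst2 v e f with hg
  have hev : ∀ s : Fin 2 → F, aeval (fun j => v j + ∑ i, e i j * s i) f = aeval s g := by
    intro s; rw [hg, aeval_subst2]; rfl
  simp only [hev]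
  have hdeg : g.totalDegree ≤ q + 1 := totalDegree_subst2_le v e hf
  have hpen : ∀ P d : Fin 2 → F, d ≠ 0 → pencil g P d ≠ 0 := by
    intro P d hd h
    rw [hg, pencil_subst2] at h
    apply hext d hd
    rw [← (pencil_top hf (fun j => v j + ∑ i, e i j * P i) (fun j => ∑ i, e i j * d i)).2, h]
    simp
  have hd0 : (![1, 0] : Fin 2 → F) ≠ 0 := by intro h; simpa using congrFun h 0
  have hg0 : g ≠ 0 := by
    intro h
    apply hpen 0 _ hd0
    rw [h]; simp [pencil]
  by_cases hirr : Irreducible g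
  · have h2 : (∑ i, (X i ^ (q ^ 2) - X i) * pderiv i g).totalDegree ≤ q ^ 2 + q := by
      refine totalDegree_finsetSum_le fun i _ => ?_
      refine (totalDegree_mul _ _).trans (add_le_add ?_ ?_)
      · refine (totalDegree_sub _ _).trans (max_le ?_ ?_)
        · refine (totalDegree_pow _ _).trans ?_
          simp
        · rw [totalDegree_X]; nlinarith
      · rw [hg, pderiv_subst2]
        refine totalDegree_finsetSum_le fun j _ => ?_
        refine (totalDegree_mul _ _).trans ?_
        rw [totalDegree_C, add_zero]
        refine totalDegree_subst2_le v e ?_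
        simpa using hf.pderiv (i := j)
    have := count_irred hcard hqF hirr.prime rfl
      (not_dvd_h hcard hqF hq hf v e hext) h2
    have h3 : g.totalDegree * (q ^ 2 + q) ≤ (q + 1) * (q ^ 2 + q) := Nat.mul_le_mul_right _ hdeg
    have h4 := this.trans h3
    clear * - h4 hq
    obtain ⟨r, rfl⟩ : ∃ r, q = r + 3 := ⟨q - 3, by omega⟩
    have e1 : 2 * (r + 3) ^ 3 =
      (r + 3 + 1) * ((r + 3) ^ 2 + (r + 3)) + (r ^ 3 + 7 * r ^ 2 + 14 * r + 4) + 2 := by ring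
    omega
  · have hnu : ¬ IsUnit g := by
      intro hu
      rw [MvPolynomial.isUnit_iff_eq_C_of_isReduced] at hu
      obtain ⟨r, hr, hrg⟩ := hu
      have h1 := (pencil_top hf (fun j => v j + ∑ i, e i j * (0 : Fin 2 → F) i)
        (fun j => ∑ i, e i j * (![1, 0] : Fin 2 → F) i)).2
      rw [← pencil_subst2, ← hg, hrg] at h1
      apply hext _ hd0
      rw [← h1]
      simp [pencil]
    rw [irreducible_iff] at hirr
    push Not at hirr
    obtain ⟨a, b, hab, ha, hb⟩ := hirr hnu
    have ha0 : a ≠ 0 := by rintro rfl; apply hg0; rw [hab]; simp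
    have hb0 : b ≠ 0 := by rintro rfl; apply hg0; rw [hab]; simp
    have hpos : ∀ c : MvPolynomial (Fin 2) F, c ≠ 0 → ¬ IsUnit c → 1 ≤ c.totalDegree := by
      intro c hc hu
      by_contra hlt
      have h0 : c.totalDegree = 0 := by omega
      rw [totalDegree_eq_zero_iff_eq_C] at h0
      apply hu
      rw [h0]
      refine IsUnit.map C ?_
      rw [isUnit_iff_ne_zero]
      intro h; rw [h] at h0; apply hc; rw [h0]; simp
    have hda := hpos a ha0 ha
    have hdb := hpos b hb0 hb
    have hsum : a.totalDegree + b.totalDegree ≤ q + 1 := by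
      rw [← totalDegree_mul_of_isDomain ha0 hb0, ← hab]; exact hdeg
    have hpab : ∀ P d : Fin 2 → F, pencil g P d = pencil a P d * pencil b P d := by
      intro P d; rw [hab]; simp [pencil]
    have ca := count_factor a _ le_rfl hda (fun P d hd h => hpen P d hd (by rw [hpab, h, zero_mul]))
    have cb := count_factor b _ le_rfl hdb (fun P d hd h => hpen P d hd (by rw [hpab, h, mul_zero]))
    have hsub : (Finset.univ.filter fun s : Fin 2 → F => aeval s g = 0) ⊆
        (Finset.univ.filter fun s : Fin 2 → F => aeval s a = 0) ∪
        (Finset.univ.filter fun s : Fin 2 → F => aeval s b = 0) := by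
      intro s hs
      simp only [Finset.mem_union, Finset.mem_filter, Finset.mem_univ, true_and] at hs ⊢
      rw [hab, map_mul] at hs
      exact mul_eq_zero.1 hs
    have hc := (Finset.card_le_card hsub).trans (Finset.card_union_le _ _)
    rw [hcard] at ca cb
    obtain ⟨x, hx⟩ : ∃ x, a.totalDegree = x + 1 := ⟨_, (Nat.sub_add_cancel hda).symm⟩
    obtain ⟨y, hy⟩ : ∃ y, b.totalDegree = y + 1 := ⟨_, (Nat.sub_add_cancel hdb).symm⟩
    rw [hx, Nat.add_sub_cancel] at ca
    rw [hy, Nat.add_sub_cancel] at cb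
    have hxy : x + y + 1 ≤ q := by omega
    have : (q ^ 2 + 1) * (x + y + 1) ≤ (q ^ 2 + 1) * q := Nat.mul_le_mul_left _ hxy
    nlinarith

end Curve
end

section
section Reverse
variable {F : Type} [Field F] {n : ℕ}

/-- `p'` is the reversal of `p` with respect to degree `N`. -/
def RevC (p p' : Polynomial F) (N : ℕ) : Prop := p.natDegree ≤ N ∧ p.reflect N = p'

theorem RevC.mul {p p' r r' : Polynomial F} {N M : ℕ} (h : RevC p p' N) (h' : RevC r r' M) :
    RevC (p * r) (p' * r') (N + M) :=
  ⟨Polynomial.natDegree_mul_le_of_le h.1 h'.1, by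
    rw [Polynomial.reflect_mul _ _ h.1 h'.1, h.2, h'.2]⟩

theorem RevC.one : RevC (1 : Polynomial F) 1 0 := by
  exact ⟨by simp, by simp⟩

theorem RevC.pow {p p' : Polynomial F} {N : ℕ} (h : RevC p p' N) (m : ℕ) :
    RevC (p ^ m) (p' ^ m) (m * N) := by
  induction m with
  | zero => simpa using RevC.one
  | succ m ih => rw [pow_succ, pow_succ, Nat.succ_mul]; exact ih.mul h

theorem RevC.prod {ι : Type} (s : Finset ι) (p p' : ι → Polynomial F) (N : ι → ℕ)
    (h : ∀ i ∈ s, RevC (p i) (p' i) (N i)) :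
    RevC (∏ i ∈ s, p i) (∏ i ∈ s, p' i) (∑ i ∈ s, N i) := by
  classical
  induction s using Finset.induction_on with
  | empty => simpa using RevC.one
  | insert i s hi ih =>
    rw [Finset.prod_insert hi, Finset.sum_insert hi, Finset.prod_insert hi]
    exact (h i (by simp)).mul (ih fun j hj => h j (by simp [hj]))

theorem RevC.sum {ι : Type} (s : Finset ι) (p p' : ι → Polynomial F) (N : ℕ)
    (h : ∀ i ∈ s, RevC (p i) (p' i) N) : RevC (∑ i ∈ s, p i) (∑ i ∈ s, p' i) N := by
  classical
  refine ⟨Polynomial.natDegree_sum_le_of_forall_le _ _ fun i hi => (h i hi).1, ?_⟩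
  induction s using Finset.induction_on with
  | empty => simp
  | insert i s hi ih =>
    rw [Finset.sum_insert hi, Finset.sum_insert hi, Polynomial.reflect_add,
      (h i (by simp)).2, ih fun j hj => h j (by simp [hj])]

theorem pencil_reverse {f : MvPolynomial (Fin n) F} {N : ℕ} (hf : f.IsHomogeneous N)
    (u w : Fin n → F) : RevC (pencil f u w) (pencil f w u) N := by
  unfold pencil
  rw [aeval_eq_sum, aeval_eq_sum]
  refine RevC.sum _ _ _ _ fun m hm => ?_
  rw [← zero_add N]
  refine RevC.mul ?_ ?_
  · refine ⟨by rw [Polynomial.algebraMap_apply, Polynomial.natDegree_C], ?_⟩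
    rw [Polynomial.algebraMap_apply, Polynomial.reflect_C]; simp
  · rw [← degree_of_mem hf hm]
    refine RevC.prod _ _ _ _ fun i _ => ?_
    have : RevC (Polynomial.C (u i) + Polynomial.C (w i) * Polynomial.X)
        (Polynomial.C (w i) + Polynomial.C (u i) * Polynomial.X) 1 := by
      refine ⟨by compute_degree, ?_⟩
      rw [Polynomial.reflect_add, Polynomial.reflect_C, Polynomial.reflect_C_mul]
      have : Polynomial.reflect 1 (Polynomial.X : Polynomial F) = 1 := by
        simp
      rw [this]
      ring
    simpa using this.pow (m i)

theorem pencil_coeff_reverse {f : MvPolynomial (Fin n) F} {N : ℕ} (hf : f.IsHomogeneous N)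
    (u w : Fin n → F) {k : ℕ} (hk : k ≤ N) :
    (pencil f w u).coeff k = (pencil f u w).coeff (N - k) := by
  rw [← (pencil_reverse hf u w).2, Polynomial.coeff_reflect, Polynomial.revAt_le hk]

theorem pencil_coeff_one (f : MvPolynomial (Fin n) F) (u w : Fin n → F) :
    (pencil f u w).coeff 1 = ∑ i, aeval u (pderiv i f) * w i := by
  have h := congrArg (fun p => Polynomial.coeff p 0) (pencil_derivative f u w)
  simp only [Polynomial.coeff_derivative, Polynomial.finsetSum_coeff, Polynomial.coeff_mul_C,
    pencil_coeff_zero] at h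
  simpa [-aeval_eq_eval] using h

theorem pencil_coeff_top1 {f : MvPolynomial (Fin n) F} {q : ℕ} (hf : f.IsHomogeneous (q + 1))
    (u w : Fin n → F) :
    (pencil f u w).coeff q = ∑ i, aeval w (pderiv i f) * u i := by
  rw [← pencil_coeff_one, pencil_coeff_reverse hf u w (by omega)]; rfl

theorem pencil_eval' (f : MvPolynomial (Fin n) F) (u w : Fin n → F) (t : F) :
    (pencil f u w).eval t = aeval (u + t • w) f := by
  rw [pencil_eval]; congr 2; ext i; simp [mul_comm]

theorem aeval_smul_hom {f : MvPolynomial (Fin n) F} {N : ℕ} (hf : f.IsHomogeneous N)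
    (c : F) (v : Fin n → F) : aeval (c • v) f = c ^ N * aeval v f := by
  rw [aeval_eq_sum, aeval_eq_sum, Finset.mul_sum]
  refine Finset.sum_congr rfl fun m hm => ?_
  rw [← degree_of_mem hf hm, ← Finset.prod_pow_eq_pow_sum]
  simp only [Pi.smul_apply, smul_eq_mul, mul_pow, Finset.prod_mul_distrib]
  ring

theorem poly_zero_of_forall [Fintype F] {p : Polynomial F} (h : p.natDegree < Fintype.card F)
    (hz : ∀ t, p.eval t = 0) : p = 0 :=
  Polynomial.eq_zero_of_natDegree_lt_card_of_eval_eq_zero p Function.injective_id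
    (fun t => by simpa using hz t) h

open Classical in
theorem card_zeros_le [Fintype F] {p : Polynomial F} (hp : p ≠ 0) {m : ℕ} (h : p.natDegree ≤ m) :
    (Finset.univ.filter fun t : F => p.eval t = 0).card ≤ m := by
  have hsub : (Finset.univ.filter fun t : F => p.eval t = 0) ⊆ p.roots.toFinset := by
    intro t ht
    rw [Multiset.mem_toFinset, Polynomial.mem_roots hp]
    exact (Finset.mem_filter.1 ht).2
  exact (Finset.card_le_card hsub).trans ((Multiset.toFinset_card_le _).trans
    ((Polynomial.card_roots' p).trans h))

end Reverse

section NoExternal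
variable {F : Type} [Field F] [Fintype F]

open Classical in
theorem no_external {q : ℕ} (hcard : Fintype.card F = q ^ 2) (hqF : (q : F) = 0) (hq : 2 < q)
    {f : MvPolynomial (Fin 7) F} (hf : f.IsHomogeneous (q + 1))
    (hZ : (Finset.univ.filter fun v : Fin 7 → F => aeval v f = 0).card + q ^ 7 = q ^ 13 + q ^ 6)
    (e : Fin 2 → Fin 7 → F) :
    ∃ s : Fin 2 → F, s ≠ 0 ∧ aeval (fun j => ∑ i, e i j * s i) f = 0 := by
  by_contra hcon
  push Not at hcon
  have h1 := double_count (fun s : Fin 2 → F => (fun j => ∑ i, e i j * s i : Fin 7 → F))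
    (fun v => aeval v f = 0)
  have h2 : ∀ v : Fin 7 → F, (Finset.univ.filter fun s : Fin 2 → F =>
      aeval (v + fun j => ∑ i, e i j * s i) f = 0).card ≤ q ^ 3 - 1 := by
    intro v
    have := curve_bound hcard hqF hq hf v e hcon
    exact Nat.le_sub_of_add_le this
  have h3 := Finset.sum_le_card_nsmul Finset.univ _ _ (fun v _ => h2 v)
  rw [h1, Finset.card_univ, Fintype.card_fun, Fintype.card_fun, Fintype.card_fin, Fintype.card_fin,
    hcard, smul_eq_mul] at h3
  have h4 : (q ^ 2) ^ 7 * (q ^ 3 - 1) + q ^ 14 = q ^ 17 := by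
    have : 1 ≤ q ^ 3 := Nat.one_le_pow _ _ (by omega)
    obtain ⟨c, hc⟩ : ∃ c, q ^ 3 = c + 1 := ⟨q ^ 3 - 1, by omega⟩
    rw [hc, Nat.add_sub_cancel]
    calc (q ^ 2) ^ 7 * c + q ^ 14 = q ^ 14 * (c + 1) := by ring
      _ = q ^ 17 := by rw [← hc]; ring
  have h5 : (q ^ 2) ^ 2 * (Finset.univ.filter fun v : Fin 7 → F => aeval v f = 0).card + q ^ 11
      = q ^ 17 + q ^ 10 := by
    calc _ = q ^ 4 * ((Finset.univ.filter fun v : Fin 7 → F => aeval v f = 0).card + q ^ 7) := by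
          ring
      _ = _ := by rw [hZ]; ring
  have h6 : q ^ 11 < q ^ 14 := Nat.pow_lt_pow_right (by omega) (by omega)
  omega

theorem bose_burton {q : ℕ} (hcard : Fintype.card F = q ^ 2)
    {f : MvPolynomial (Fin 7) F} (hf : f.IsHomogeneous (q + 1))
    (hext : ∀ e : Fin 2 → Fin 7 → F,
      ∃ s : Fin 2 → F, s ≠ 0 ∧ aeval (fun j => ∑ i, e i j * s i) f = 0)
    (W : Submodule F (Fin 7 → F)) (hW : finrank F W = 4)
    (hc : Nat.card {v : W // aeval (v : Fin 7 → F) f = 0} = q ^ 6) :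
    ∃ π : Submodule F (Fin 7 → F), π ≤ W ∧ finrank F π = 3 ∧
      ∀ v ∈ W, (aeval v f = 0 ↔ v ∈ π) := by
  have hq1 : 1 < q ^ 2 := by rw [← hcard]; exact Fintype.one_lt_card
  have hsm : ∀ (c : F) (v : Fin 7 → F), aeval v f = 0 → aeval (c • v) f = 0 := by
    intro c v h; rw [aeval_smul_hom hf, h, mul_zero]
  have hf00 : aeval (0 : Fin 7 → F) f = 0 := by
    have := aeval_smul_hom hf 0 (0 : Fin 7 → F)
    simpa [-aeval_eq_eval] using this
  have hadd : ∀ v ∈ W, ∀ w ∈ W, aeval v f = 0 → aeval w f = 0 → aeval (v + w) f = 0 := by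
    intro v hv w hw hfv hfw
    by_contra hp
    let p : W := ⟨v + w, W.add_mem hv hw⟩
    have hp0 : p ≠ 0 := by
      intro h
      apply hp
      have : v + w = 0 := congrArg Subtype.val h
      rw [this]; exact hf00
    let φ : {v : W // aeval (v : Fin 7 → F) f = 0} → W ⧸ (Submodule.span F {p}) :=
      fun v => Submodule.Quotient.mk v.1
    have hsurj : Function.Surjective φ := by
      intro y
      obtain ⟨y, rfl⟩ := Submodule.Quotient.mk_surjective _ y
      obtain ⟨s, hs, hfs⟩ := hext ![(v + w), y.1]
      have hfs' : aeval (s 0 • (v + w) + s 1 • y.1) f = 0 := by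
        rw [← hfs]; congr 2; ext j; simp [Fin.sum_univ_two]; ring
      by_cases h1 : s 1 = 0
      · exfalso
        rw [h1, zero_smul, add_zero] at hfs'
        have h0 : s 0 ≠ 0 := by
          intro h0; apply hs; ext i; fin_cases i
          · exact h0
          · exact h1
        apply hp
        have := hsm (s 0)⁻¹ _ hfs'
        rwa [smul_smul, inv_mul_cancel₀ h0, one_smul] at this
      · refine ⟨⟨(s 1)⁻¹ • (s 0 • p + s 1 • y), hsm _ _ hfs'⟩, ?_⟩
        change Submodule.Quotient.mk _ = Submodule.Quotient.mk _
        rw [Submodule.Quotient.eq, Submodule.mem_span_singleton]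
        refine ⟨(s 1)⁻¹ * s 0, ?_⟩
        change _ = (s 1)⁻¹ • (s 0 • p + s 1 • y) - y
        rw [smul_add, smul_smul, smul_smul, inv_mul_cancel₀ h1, one_smul, add_sub_cancel_right]
    have hcq : Nat.card (W ⧸ (Submodule.span F {p})) = q ^ 6 := by
      have h1 := Submodule.finrank_quotient_add_finrank (Submodule.span F {p})
      rw [finrank_span_singleton hp0, hW] at h1
      have h2 : finrank F (W ⧸ (Submodule.span F {p})) = 3 := by omega
      rw [Module.natCard_eq_pow_finrank (K := F), h2, Nat.card_eq_fintype_card, hcard]; ring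
    have hbij := hsurj.bijective_of_nat_card_le (by rw [hcq, hc])
    have := @hbij.1 ⟨⟨v, hv⟩, hfv⟩ ⟨⟨-w, W.neg_mem hw⟩, by
      have := hsm (-1) w hfw
      simpa [-aeval_eq_eval] using this⟩ (by
      change Submodule.Quotient.mk _ = Submodule.Quotient.mk _
      rw [Submodule.Quotient.eq, Submodule.mem_span_singleton]
      refine ⟨1, ?_⟩
      rw [one_smul]
      ext1
      simp [p])
    have h2 : v = -w := congrArg (fun x => (x.1.1 : Fin 7 → F)) this
    apply hp
    rw [h2, neg_add_cancel]; exact hf00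
  let π : Submodule F (Fin 7 → F) :=
    { carrier := {v | v ∈ W ∧ aeval v f = 0}
      add_mem' := fun {a b} ha hb => ⟨W.add_mem ha.1 hb.1, hadd a ha.1 b hb.1 ha.2 hb.2⟩
      zero_mem' := ⟨W.zero_mem, hf00⟩
      smul_mem' := fun c x hx => ⟨W.smul_mem c hx.1, hsm c x hx.2⟩ }
  have hmem : ∀ v, v ∈ π ↔ v ∈ W ∧ aeval v f = 0 := fun v => Iff.rfl
  refine ⟨π, fun v hv => hv.1, ?_, fun v hv => ⟨fun h => ⟨hv, h⟩, fun h => h.2⟩⟩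
  have e : π ≃ {v : W // aeval (v : Fin 7 → F) f = 0} :=
    { toFun := fun v => ⟨⟨v.1, v.2.1⟩, v.2.2⟩
      invFun := fun v => ⟨v.1.1, v.1.2, v.2⟩
      left_inv := fun v => rfl
      right_inv := fun v => rfl }
  have h1 : Nat.card π = q ^ 6 := by rw [Nat.card_congr e, hc]
  rw [Module.natCard_eq_pow_finrank (K := F), Nat.card_eq_fintype_card, hcard,
    show q ^ 6 = (q ^ 2) ^ 3 by ring] at h1
  exact Nat.pow_right_injective hq1 h1

end NoExternal
end

section
/-- the working hypotheses -/
structure Setup (q : ℕ) {F : Type} [Field F] [Fintype F] (f : MvPolynomial (Fin 7) F)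
    (W π : Submodule F (Fin 7 → F)) : Prop where
  hq : 2 < q
  hcard : Fintype.card F = q ^ 2
  hqF : (q : F) = 0
  frob : ∀ a b : F, (a + b) ^ q = a ^ q + b ^ q
  hf : f.IsHomogeneous (q + 1)
  hπW : π ≤ W
  hπ : finrank F π = 3
  hW : finrank F W = 4
  hmem : ∀ v ∈ W, (aeval v f = 0 ↔ v ∈ π)
  hns : ∀ U : Submodule F (Fin 7 → F), finrank F U = 4 → ∃ v ∈ U, aeval v f ≠ 0
  hZ : Nat.card {v : Fin 7 → F // aeval v f = 0} + q ^ 7 = q ^ 13 + q ^ 6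

/-- coefficient of `t^q` in `f (u + t d)` -/
noncomputable def Bco {F : Type} [Field F] {n : ℕ} (q : ℕ) (f : MvPolynomial (Fin n) F)
    (d u : Fin n → F) : F := (pencil f u d).coeff q

namespace Setup
variable {q : ℕ} {F : Type} [Field F] [Fintype F] {f : MvPolynomial (Fin 7) F}
    {W π : Submodule F (Fin 7 → F)}

theorem B_eq (S : Setup q f W π) (d u : Fin 7 → F) : Bco q f d u = ∑ i, aeval d (pderiv i f) * u i :=
  pencil_coeff_top1 S.hf u d

theorem B_add (S : Setup q f W π) (d u v : Fin 7 → F) : Bco q f d (u + v) = Bco q f d u + Bco q f d v := by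
  rw [S.B_eq, S.B_eq, S.B_eq, ← Finset.sum_add_distrib]
  exact Finset.sum_congr rfl fun i _ => by rw [Pi.add_apply]; ring

theorem B_smul (S : Setup q f W π) (c : F) (d u : Fin 7 → F) : Bco q f d (c • u) = c * Bco q f d u := by
  rw [S.B_eq, S.B_eq, Finset.mul_sum]
  exact Finset.sum_congr rfl fun i _ => by rw [Pi.smul_apply, smul_eq_mul]; ring

theorem lt_card (S : Setup q f W π) : q + 1 < Fintype.card F := by
  have := S.hq
  rw [S.hcard]; nlinarith

theorem fzero (S : Setup q f W π) {v : Fin 7 → F} (hv : v ∈ π) : aeval v f = 0 := (S.hmem v (S.hπW hv)).2 hv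

theorem deg_le (S : Setup q f W π) (u : Fin 7 → F) {d : Fin 7 → F} (hd : d ∈ π) : (pencil f u d).natDegree ≤ q := by
  have h := pencil_top S.hf u d
  rw [S.fzero hd] at h
  by_contra hlt
  have h1 : (pencil f u d).natDegree = q + 1 := le_antisymm h.1 (by omega)
  have h2 : (pencil f u d).leadingCoeff = 0 := by rw [Polynomial.leadingCoeff, h1, h.2]
  rw [Polynomial.leadingCoeff_eq_zero] at h2
  rw [h2] at h1; simp at h1

theorem B_zero (S : Setup q f W π) {x d : Fin 7 → F} (hx : x ∈ π) (hd : d ∈ π) : Bco q f d x = 0 := by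
  have : pencil f x d = 0 := by
    refine poly_zero_of_forall ((S.deg_le x hd).trans_lt (by have := S.lt_card; omega)) fun t => ?_
    rw [pencil_eval']
    exact S.fzero (π.add_mem hx (π.smul_mem t hd))
  rw [Bco, this, Polynomial.coeff_zero]

theorem B_add_pi (S : Setup q f W π) {x d : Fin 7 → F} (u : Fin 7 → F) (hx : x ∈ π) (hd : d ∈ π) :
    Bco q f d (u + x) = Bco q f d u := by
  rw [S.B_add, S.B_zero hx hd, add_zero]

theorem card_pi (S : Setup q f W π) : Nat.card π = q ^ 6 := by
  rw [Module.natCard_eq_pow_finrank (K := F), S.hπ, Nat.card_eq_fintype_card, S.hcard]; ring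

open Classical in
theorem line_le (S : Setup q f W π) {u d : Fin 7 → F} (hd : d ∈ π) (hB : Bco q f d u ≠ 0) :
    (Finset.univ.filter fun t : F => aeval (u + t • d) f = 0).card ≤ q := by
  have hne : pencil f u d ≠ 0 := by
    intro h; apply hB; rw [Bco, h, Polynomial.coeff_zero]
  have := card_zeros_le hne (S.deg_le u hd)
  simpa only [pencil_eval'] using this

/-- number of zeros in the coset `u + π` -/
noncomputable def Nz (_ : Setup q f W π) (u : Fin 7 → F) : ℕ :=
  Nat.card {x : π // aeval (u + (x : Fin 7 → F)) f = 0}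

open Classical in
theorem Nz_eq (S : Setup q f W π) (u : Fin 7 → F) :
    S.Nz u = (Finset.univ.filter fun x : π => aeval (u + (x : Fin 7 → F)) f = 0).card := by
  rw [Nz, Nat.card_eq_fintype_card, Fintype.card_subtype]

open Classical in
theorem sum_lines (S : Setup q f W π) (u d : Fin 7 → F) (hd : d ∈ π) :
    ∑ x : π, (Finset.univ.filter fun t : F => aeval (u + (x : Fin 7 → F) + t • d) f = 0).card =
      q ^ 2 * S.Nz u := by
  have := double_count (A := π) (I := F) (fun t => t • ⟨d, hd⟩)
    (fun x => aeval (u + (x : Fin 7 → F)) f = 0)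
  rw [S.hcard, ← S.Nz_eq] at this
  rw [← this]
  refine Finset.sum_congr rfl fun x _ => ?_
  refine congrArg Finset.card (Finset.filter_congr fun t _ => ?_)
  rw [Submodule.coe_add, Submodule.coe_smul, add_assoc]

theorem Nz_le_of_B (S : Setup q f W π) {u d : Fin 7 → F} (hd : d ∈ π) (hB : Bco q f d u ≠ 0) : S.Nz u ≤ q ^ 5 := by
  classical
  have h1 := S.sum_lines u d hd
  have h2 := Finset.sum_le_card_nsmul (Finset.univ : Finset π) _ q (fun x _ =>
    S.line_le (u := u + x) hd (by rwa [S.B_add_pi u x.2 hd]))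
  rw [h1, Finset.card_univ, ← Nat.card_eq_fintype_card, S.card_pi, smul_eq_mul,
    show q ^ 6 * q = q ^ 2 * q ^ 5 by ring] at h2
  exact Nat.le_of_mul_le_mul_left h2 (by have := S.hq; positivity)

open Classical in
theorem line_eq (S : Setup q f W π) {u d : Fin 7 → F} (hd : d ∈ π) (hB : Bco q f d u ≠ 0) (hN : S.Nz u = q ^ 5)
    {x : Fin 7 → F} (hx : x ∈ π) :
    (Finset.univ.filter fun t : F => aeval (u + x + t • d) f = 0).card = q := by
  have h1 := S.sum_lines u d hd
  have h2 : ∀ x ∈ (Finset.univ : Finset π),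
      (Finset.univ.filter fun t : F => aeval (u + (x : Fin 7 → F) + t • d) f = 0).card ≤ q := fun x _ =>
    S.line_le (u := u + x) hd (by rwa [S.B_add_pi u x.2 hd])
  have h3 := (Finset.sum_eq_sum_iff_of_le h2).1 (by
    rw [h1, Finset.sum_const, Finset.card_univ, ← Nat.card_eq_fintype_card, S.card_pi, smul_eq_mul,
      hN]; ring)
  exact h3 ⟨x, hx⟩ (Finset.mem_univ _)

theorem exists_nonzero (S : Setup q f W π) {u : Fin 7 → F} (hu : u ∉ W) : ∃ x ∈ π, aeval (u + x) f ≠ 0 := by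
  by_contra hcon
  push Not at hcon
  have hu0 : u ≠ 0 := by rintro rfl; exact hu W.zero_mem
  have huπ : u ∉ π := fun h => hu (S.hπW h)
  have hfr : finrank F ↥(π ⊔ Submodule.span F {u}) = 4 := by
    have h1 := Submodule.finrank_sup_add_finrank_inf_eq π (Submodule.span F {u})
    have h2 : π ⊓ Submodule.span F {u} = ⊥ := by
      rw [← disjoint_iff, Submodule.disjoint_span_singleton' hu0]; exact huπ
    rw [h2, finrank_bot, finrank_span_singleton hu0, S.hπ] at h1
    omega
  obtain ⟨v, hv, hfv⟩ := S.hns _ hfr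
  apply hfv
  rw [Submodule.mem_sup] at hv
  obtain ⟨x, hx, y, hy, rfl⟩ := hv
  obtain ⟨c, rfl⟩ := Submodule.mem_span_singleton.1 hy
  by_cases hc : c = 0
  · rw [hc, zero_smul, add_zero]; exact S.fzero hx
  · have : x + c • u = c • (u + c⁻¹ • x) := by
      rw [smul_add, smul_smul, mul_inv_cancel₀ hc, one_smul, add_comm]
    rw [this, aeval_smul_hom S.hf, hcon _ (π.smul_mem _ hx), mul_zero]

theorem Nz_lt_of_B (S : Setup q f W π) {u : Fin 7 → F} (hu : u ∉ W) (hB : ∀ d ∈ π, Bco q f d u = 0) :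
    S.Nz u < q ^ 5 := by
  classical
  obtain ⟨x1, hx1, hne⟩ := S.exists_nonzero hu
  have h1 := lines_through (F := F) (A := π) (fun x => aeval (u + (x : Fin 7 → F)) f = 0)
    ⟨x1, hx1⟩ (q - 1) (by
    intro d hd
    have hp : pencil f (u + x1) d ≠ 0 := by
      intro h
      apply hne
      have := pencil_coeff_zero f (u + x1) d
      rw [← this, h, Polynomial.coeff_zero]
    have hdeg : (pencil f (u + x1) d).natDegree ≤ q - 1 := by
      have h1 := S.deg_le (u + x1) d.2
      by_contra hlt
      have h2 : (pencil f (u + x1) d).natDegree = q := by omega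
      have h3 : (pencil f (u + x1) d).coeff q = 0 := by
        have := S.B_add_pi u hx1 d.2
        rw [hB d d.2] at this
        exact this
      rw [← h2] at h3
      exact hp (Polynomial.leadingCoeff_eq_zero.1 h3)
    refine le_trans (Finset.card_le_card ?_) (card_zeros_le hp hdeg)
    intro t ht
    rw [Finset.mem_filter] at ht ⊢
    refine ⟨ht.1, ?_⟩
    rw [pencil_eval', add_assoc]
    exact ht.2.2)
  have h2 : S.Nz u = (Finset.univ.filter fun x : π => x ≠ ⟨x1, hx1⟩ ∧
      aeval (u + (x : Fin 7 → F)) f = 0).card := by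
    rw [S.Nz_eq]
    refine congrArg Finset.card (Finset.filter_congr fun x _ => ?_)
    refine ⟨fun h => ⟨?_, h⟩, fun h => h.2⟩
    rintro rfl
    exact hne h
  rw [S.hcard, ← Nat.card_eq_fintype_card, S.card_pi] at h1
  have h3 : (q ^ 2 - 1) * S.Nz u ≤ (q ^ 6 - 1) * (q - 1) := by
    rw [h2]
    refine le_trans (le_of_eq ?_) h1
    congr!
  have hq := S.hq
  by_contra hlt
  push Not at hlt
  have h4 : (q ^ 2 - 1) * q ^ 5 ≤ (q ^ 6 - 1) * (q - 1) :=
    (Nat.mul_le_mul_left _ hlt).trans h3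
  have e1 : 1 ≤ q ^ 2 := Nat.one_le_pow _ _ (by omega)
  have e2 : 1 ≤ q ^ 6 := Nat.one_le_pow _ _ (by omega)
  have e3 : 1 ≤ q := by omega
  zify [e1, e2, e3] at h4
  have e5 : (q : ℤ) ^ 5 ≤ (q : ℤ) ^ 6 := pow_le_pow_right₀ (by exact_mod_cast e3) (by omega)
  have e6 : (3 : ℤ) ≤ q := by exact_mod_cast hq
  nlinarith

theorem Nz_le (S : Setup q f W π) {u : Fin 7 → F} (hu : u ∉ W) : S.Nz u ≤ q ^ 5 := by
  by_cases h : ∀ d ∈ π, Bco q f d u = 0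
  · exact (S.Nz_lt_of_B hu h).le
  · push Not at h
    obtain ⟨d, hd, hB⟩ := h
    exact S.Nz_le_of_B hd hB

theorem Nz_mem (S : Setup q f W π) {u : Fin 7 → F} (hu : u ∈ π) : S.Nz u = q ^ 6 := by
  rw [← S.card_pi, Nz]
  exact Nat.card_congr (Equiv.subtypeUnivEquiv fun x => S.fzero (π.add_mem hu x.2))

theorem Nz_W (S : Setup q f W π) {u : Fin 7 → F} (hu : u ∈ W) (hu' : u ∉ π) : S.Nz u = 0 := by
  rw [Nz, Nat.card_eq_zero]
  left
  refine ⟨fun x => hu' ?_⟩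
  have := (S.hmem _ (W.add_mem hu (S.hπW x.1.2))).1 x.2
  simpa using π.sub_mem this x.1.2

open Classical in
theorem card_sub (hc : Fintype.card F = q ^ 2) (U : Submodule F (Fin 7 → F)) :
    (Finset.univ.filter fun v : Fin 7 → F => v ∈ U).card = q ^ (2 * finrank F U) := by
  rw [← Fintype.card_subtype, ← Nat.card_eq_fintype_card]
  rw [Module.natCard_eq_pow_finrank (K := F), Nat.card_eq_fintype_card, hc, pow_mul]

open Classical in
theorem sum_bound (S : Setup q f W π) (U : Submodule F (Fin 7 → F)) (hU : W ≤ U) :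
    ∑ v : Fin 7 → F, ((if v ∈ π then q ^ 6 else 0) + (if v ∈ U ∧ v ∉ W then q ^ 5 else 0)) +
      q ^ 13 = q ^ 12 + q ^ (2 * finrank F U) * q ^ 5 := by
  rw [Finset.sum_add_distrib, ← Finset.sum_filter, ← Finset.sum_filter, Finset.sum_const,
    Finset.sum_const, card_sub S.hcard, S.hπ, smul_eq_mul, smul_eq_mul]
  have h : (Finset.univ.filter fun v : Fin 7 → F => v ∈ U ∧ v ∉ W).card + q ^ 8 =
      q ^ (2 * finrank F U) := by
    have h1 := card_sub S.hcard W
    rw [S.hW] at h1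
    rw [← card_sub S.hcard U, show 8 = 2 * 4 by norm_num, ← h1,
      ← Finset.card_union_of_disjoint]
    · congr 1
      ext v
      simp only [Finset.mem_union, Finset.mem_filter, Finset.mem_univ, true_and]
      constructor
      · rintro (h | h)
        · exact h.1
        · exact hU h
      · intro h
        by_cases hv : v ∈ W
        · exact Or.inr hv
        · exact Or.inl ⟨h, hv⟩
    · rw [Finset.disjoint_left]
      intro v hv hv'
      exact (Finset.mem_filter.1 hv).2.2 (Finset.mem_filter.1 hv').2
  rw [← h]; ring

open Classical in
theorem sum_Nz (S : Setup q f W π) : ∑ v : Fin 7 → F, S.Nz v + q ^ 13 = q ^ 12 + q ^ 19 := by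
  have h := double_count (A := Fin 7 → F) (I := π) (fun x => x) (fun v => aeval v f = 0)
  simp only [← S.Nz_eq] at h
  rw [h, ← Nat.card_eq_fintype_card, S.card_pi, ← Fintype.card_subtype,
    ← Nat.card_eq_fintype_card]
  have := S.hZ
  calc _ = q ^ 6 * (Nat.card {v : Fin 7 → F // aeval v f = 0} + q ^ 7) := by ring
    _ = _ := by rw [this]; ring

theorem Nz_eq_pow (S : Setup q f W π) {u : Fin 7 → F} (hu : u ∉ W) : S.Nz u = q ^ 5 := by
  classical
  have hle : ∀ v ∈ (Finset.univ : Finset (Fin 7 → F)), S.Nz v ≤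
      (if v ∈ π then q ^ 6 else 0) + (if v ∈ (⊤ : Submodule F (Fin 7 → F)) ∧ v ∉ W
        then q ^ 5 else 0) := by
    intro v _
    by_cases h1 : v ∈ W
    · by_cases h2 : v ∈ π
      · simp [h1, h2, S.Nz_mem h2]
      · simp [h1, h2, S.Nz_W h1 h2]
    · have h2 : v ∉ π := fun h => h1 (S.hπW h)
      simp [h1, h2, S.Nz_le h1]
  have h1 := S.sum_bound ⊤ le_top
  have h2 := S.sum_Nz
  rw [finrank_top, Module.finrank_fin_fun] at h1
  have h3 := (Finset.sum_eq_sum_iff_of_le hle).1 (by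
    have : q ^ (2 * 7) * q ^ 5 = q ^ 19 := by ring
    omega)
  have h4 := h3 u (Finset.mem_univ _)
  have h5 : u ∉ π := fun h => hu (S.hπW h)
  simpa [hu, h5] using h4

theorem exists_B (S : Setup q f W π) {u : Fin 7 → F} (hu : u ∉ W) : ∃ d ∈ π, Bco q f d u ≠ 0 := by
  by_contra hcon
  push Not at hcon
  exact (S.Nz_lt_of_B hu hcon).ne (S.Nz_eq_pow hu)

theorem card_U (S : Setup q f W π) (U : Submodule F (Fin 7 → F)) (hU : W ≤ U) (hU6 : finrank F U = 6) :
    Nat.card {v : Fin 7 → F // v ∈ U ∧ aeval v f = 0} + q ^ 7 = q ^ 11 + q ^ 6 := by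
  classical
  have h := double_count (A := Fin 7 → F) (I := π) (fun x => x) (fun v => v ∈ U ∧ aeval v f = 0)
  have h2 := S.sum_bound U hU
  rw [← Nat.card_eq_fintype_card, S.card_pi, ← Fintype.card_subtype,
    ← Nat.card_eq_fintype_card] at h
  have h3 : ∀ v : Fin 7 → F, (Finset.univ.filter fun x : π => v + (x : Fin 7 → F) ∈ U ∧
      aeval (v + (x : Fin 7 → F)) f = 0).card =
      (if v ∈ π then q ^ 6 else 0) + (if v ∈ U ∧ v ∉ W then q ^ 5 else 0) := by
    intro v
    by_cases hv : v ∈ U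
    · have : (Finset.univ.filter fun x : π => v + (x : Fin 7 → F) ∈ U ∧
          aeval (v + (x : Fin 7 → F)) f = 0).card = S.Nz v := by
        rw [S.Nz_eq]
        refine congrArg Finset.card (Finset.filter_congr fun x _ => ?_)
        exact ⟨fun h => h.2, fun h => ⟨U.add_mem hv (hU (S.hπW x.2)), h⟩⟩
      rw [this]
      by_cases h1 : v ∈ W
      · by_cases h2 : v ∈ π
        · simp [h1, h2, S.Nz_mem h2]
        · simp [h1, h2, S.Nz_W h1 h2]
      · have h2 : v ∉ π := fun h => h1 (S.hπW h)
        simp [h1, h2, hv, S.Nz_eq_pow h1]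
    · have h2 : v ∉ π := fun h => hv (hU (S.hπW h))
      rw [Finset.filter_false_of_mem]
      · simp [hv, h2]
      · intro x _ hx
        apply hv
        simpa using U.sub_mem hx.1 (hU (S.hπW x.2))
  have h' : ∑ v : Fin 7 → F, ((if v ∈ π then q ^ 6 else 0) + (if v ∈ U ∧ v ∉ W then q ^ 5 else 0)) =
      q ^ 6 * Nat.card {v : Fin 7 → F // v ∈ U ∧ aeval v f = 0} := by
    rw [← h]
    refine Finset.sum_congr rfl fun v _ => ((h3 v).symm.trans ?_)
    congr!
  rw [h', hU6] at h2
  have h4 : q ^ 6 * (Nat.card {v : Fin 7 → F // v ∈ U ∧ aeval v f = 0} + q ^ 7) =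
      q ^ 6 * (q ^ 11 + q ^ 6) := by
    calc _ = q ^ 6 * Nat.card {v : Fin 7 → F // v ∈ U ∧ aeval v f = 0} + q ^ 13 := by ring
      _ = _ := by rw [h2]; ring
  exact Nat.eq_of_mul_eq_mul_left (by have := S.hq; positivity) h4

end Setup
end

section
section plane
variable {F : Type} [Field F] [Fintype F]

open Classical in
theorem lambda_card {q : ℕ} (hq : 2 < q) (hcard : Fintype.card F = q ^ 2) (G : F → F → F)
    (hcol : ∀ t, (Finset.univ.filter fun s => G s t = 0).card = q)
    (L : Finset (F × F)) (hL : ∀ p ∈ L, ∀ t, G (p.2 + p.1 * t) t = 0) : L.card ≤ q := by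
  by_contra hlt
  push Not at hlt
  obtain ⟨L', hL', hc⟩ := Finset.exists_subset_card_eq (s := L) (n := q + 1) hlt
  have h := Finset.card_mul_le_card_mul (s := (Finset.univ : Finset F)) (t := L'.offDiag)
    (fun t pp => pp.1.2 + pp.1.1 * t = pp.2.2 + pp.2.1 * t) (m := 2) (n := 1)
    (by
      intro t _
      obtain ⟨x, hx, y, hy, hxy, he⟩ := Finset.exists_ne_map_eq_of_card_lt_of_maps_to
        (s := L') (t := Finset.univ.filter fun s => G s t = 0) (f := fun p => p.2 + p.1 * t)
        (by rw [hcol, hc]; omega)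
        (fun p hp => by
          refine Finset.mem_coe.2 (Finset.mem_filter.2 ⟨Finset.mem_univ _, ?_⟩)
          exact hL p (hL' hp) t)
      have : ({(x, y), (y, x)} : Finset _).card = 2 := by
        rw [Finset.card_pair]
        intro h
        exact hxy (Prod.mk.inj h).1
      rw [← this]
      refine Finset.card_le_card ?_
      intro z hz
      rw [Finset.bipartiteAbove, Finset.mem_filter, Finset.mem_offDiag]
      rw [Finset.mem_insert, Finset.mem_singleton] at hz
      rcases hz with rfl | rfl
      · exact ⟨⟨hx, hy, hxy⟩, he⟩
      · exact ⟨⟨hy, hx, hxy.symm⟩, he.symm⟩)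
    (by
      rintro ⟨x, y⟩ hxy
      rw [Finset.mem_offDiag] at hxy
      refine Finset.card_le_one.2 ?_
      intro t ht t' ht'
      have h1 := (Finset.mem_filter.1 ht).2
      have h2 := (Finset.mem_filter.1 ht').2
      simp only at h1 h2
      have h3 : (x.1 - y.1) * (t - t') = 0 := by linear_combination h1 - h2
      rcases mul_eq_zero.1 h3 with h | h
      · exfalso
        apply hxy.2.2
        have h4 : x.1 = y.1 := sub_eq_zero.1 h
        rw [h4] at h1
        exact Prod.ext h4 (add_right_cancel h1)
      · exact sub_eq_zero.1 h)
  rw [Finset.card_univ, hcard, Finset.offDiag_card, hc, mul_one] at h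
  have : (q + 1) * (q + 1) - (q + 1) = q * q + q := by
    rw [show (q + 1) * (q + 1) = q * q + q + (q + 1) by ring]; omega
  rw [this] at h
  nlinarith

open Classical in
theorem lambda_through {q : ℕ} (hq : 2 < q) (hcard : Fintype.card F = q ^ 2) (G : F → F → F)
    (hcol : ∀ t, (Finset.univ.filter fun s => G s t = 0).card = q)
    (hline : ∀ a c, (∀ t, G (c + a * t) t = 0) ∨
      (Finset.univ.filter fun t => G (c + a * t) t = 0).card ≤ q)
    (s0 t0 : F) (h0 : G s0 t0 = 0) :
    ∃ a c, c + a * t0 = s0 ∧ ∀ t, G (c + a * t) t = 0 := by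
  by_contra hcon
  push Not at hcon
  have hsum : ∑ a : F, ((Finset.univ.erase t0).filter
        fun t => G (s0 - a * t0 + a * t) t = 0).card
      = ∑ t ∈ Finset.univ.erase t0, (Finset.univ.filter
        fun a : F => G (s0 - a * t0 + a * t) t = 0).card := by
    simp only [Finset.card_filter]
    rw [Finset.sum_comm]
  have hr : ∑ t ∈ Finset.univ.erase t0, (Finset.univ.filter
        fun a : F => G (s0 - a * t0 + a * t) t = 0).card = (q ^ 2 - 1) * q := by
    rw [Finset.sum_congr rfl (g := fun _ => q), Finset.sum_const,
      Finset.card_erase_of_mem (Finset.mem_univ _), Finset.card_univ, hcard, smul_eq_mul]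
    intro t ht
    have hne : t - t0 ≠ 0 := sub_ne_zero.2 (Finset.ne_of_mem_erase ht)
    rw [← hcol t]
    refine Finset.card_bij' (fun a _ => s0 - a * t0 + a * t) (fun s _ => (s - s0) / (t - t0))
      ?_ ?_ ?_ ?_
    · intro a ha
      exact Finset.mem_filter.2 ⟨Finset.mem_univ _, (Finset.mem_filter.1 ha).2⟩
    · intro s hs
      refine Finset.mem_filter.2 ⟨Finset.mem_univ _, ?_⟩
      have : s0 - (s - s0) / (t - t0) * t0 + (s - s0) / (t - t0) * t = s := by
        field_simp; ring
      rw [this]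
      exact (Finset.mem_filter.1 hs).2
    · intro a _
      field_simp; ring
    · intro s _
      field_simp; ring
  have hl : ∑ a : F, ((Finset.univ.erase t0).filter
        fun t => G (s0 - a * t0 + a * t) t = 0).card ≤ q ^ 2 * (q - 1) := by
    rw [← hcard, ← Finset.card_univ, ← smul_eq_mul]
    refine Finset.sum_le_card_nsmul _ _ _ ?_
    intro a _
    rw [Finset.filter_erase, Finset.card_erase_of_mem]
    · refine Nat.sub_le_sub_right ?_ 1
      rcases hline a (s0 - a * t0) with h | h
      · obtain ⟨t, ht⟩ := hcon a (s0 - a * t0) (by ring)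
        exact absurd (h t) ht
      · exact h
    · refine Finset.mem_filter.2 ⟨Finset.mem_univ _, ?_⟩
      rw [sub_add_cancel]; exact h0
  rw [hsum, hr] at hl
  have e1 : 1 ≤ q ^ 2 := Nat.one_le_pow _ _ (by omega)
  have e2 : 1 ≤ q := by omega
  zify [e1, e2] at hl
  have : (2 : ℤ) < q := by exact_mod_cast hq
  nlinarith

open Classical in
theorem plane {q : ℕ} (hq : 2 < q) (hcard : Fintype.card F = q ^ 2) (G : F → F → F)
    (hcol : ∀ t, (Finset.univ.filter fun s => G s t = 0).card = q)
    (hline : ∀ a c, (∀ t, G (c + a * t) t = 0) ∨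
      (Finset.univ.filter fun t => G (c + a * t) t = 0).card ≤ q) :
    ∃ a, ∀ s t, G s t = 0 ↔ G (s - a * t) 0 = 0 := by
  have hthr := lambda_through hq hcard G hcol hline
  set L : Finset (F × F) := Finset.univ.filter fun p => ∀ t, G (p.2 + p.1 * t) t = 0 with hL
  have hmL : ∀ p, p ∈ L ↔ ∀ t, G (p.2 + p.1 * t) t = 0 := fun p => by
    rw [hL, Finset.mem_filter]; exact ⟨fun h => h.2, fun h => ⟨Finset.mem_univ _, h⟩⟩
  have hcL := lambda_card hq hcard G hcol L (fun p hp => (hmL p).1 hp)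
  -- two members never meet
  have hmeet : ∀ x ∈ L, ∀ y ∈ L, ∀ t, x.2 + x.1 * t = y.2 + y.1 * t → x = y := by
    intro x hx y hy t he
    have hsurj : Set.SurjOn (fun p : F × F => p.2 + p.1 * t) L
        (Finset.univ.filter fun s => G s t = 0 : Finset F) := by
      intro s hs
      have hs' := (Finset.mem_filter.1 (Finset.mem_coe.1 hs)).2
      obtain ⟨a, c, h1, h2⟩ := hthr s t hs'
      exact ⟨(a, c), Finset.mem_coe.2 ((hmL _).2 h2), h1⟩
    have hinj := Finset.injOn_of_surjOn_of_card_le (fun p : F × F => p.2 + p.1 * t)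
      (fun p hp => Finset.mem_coe.2 (Finset.mem_filter.2 ⟨Finset.mem_univ _, (hmL p).1 hp t⟩))
      hsurj (by rw [hcol]; exact hcL)
    exact hinj hx hy he
  have hslope : ∀ x ∈ L, ∀ y ∈ L, x.1 = y.1 := by
    intro x hx y hy
    by_contra hne
    have hne' : x.1 - y.1 ≠ 0 := sub_ne_zero.2 hne
    apply hne
    rw [hmeet x hx y hy ((y.2 - x.2) / (x.1 - y.1)) (by field_simp; ring)]
  have hne : (Finset.univ.filter fun s => G s 0 = 0).Nonempty := by
    rw [← Finset.card_pos, hcol]; omega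
  obtain ⟨s1, hs1⟩ := hne
  obtain ⟨a, c1, h1, h2⟩ := hthr s1 0 (Finset.mem_filter.1 hs1).2
  have ha : (a, c1) ∈ L := (hmL _).2 h2
  refine ⟨a, fun s t => ⟨fun h => ?_, fun h => ?_⟩⟩
  · obtain ⟨a', c', h3, h4⟩ := hthr s t h
    have h5 : a' = a := hslope (a', c') ((hmL _).2 h4) _ ha
    have h6 := h4 0
    rw [mul_zero, add_zero] at h6
    rwa [← h3, h5, add_sub_cancel_right]
  · obtain ⟨a', c', h3, h4⟩ := hthr _ 0 h
    have h5 : a' = a := hslope (a', c') ((hmL _).2 h4) _ ha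
    have h6 := h4 t
    rw [mul_zero, add_zero] at h3
    rwa [h5, h3, sub_add_cancel] at h6
end plane

namespace Setup
variable {q : ℕ} {F : Type} [Field F] [Fintype F] {f : MvPolynomial (Fin 7) F}
    {W π : Submodule F (Fin 7 → F)}

theorem step4 (S : Setup q f W π) {u d d' : Fin 7 → F} (hu : u ∉ W) (hd : d ∈ π) (hd' : d' ∈ π)
    (hB : Bco q f d' u ≠ 0) :
    ∃ c : F, ∀ s t : F, aeval (u + t • d + s • d') f = aeval (u + (s + t * c) • d') f := by
  classical
  have hcol : ∀ t : F, (Finset.univ.filter fun s : F => aeval (u + t • d + s • d') f = 0).card = q :=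
    fun t => S.line_eq hd' hB (S.Nz_eq_pow hu) (π.smul_mem t hd)
  obtain ⟨a, ha⟩ := plane S.hq S.hcard (fun s t => aeval (u + t • d + s • d') f) hcol (by
    intro a c
    have he : ∀ t : F, aeval (u + t • d + (c + a * t) • d') f =
        (pencil f (u + c • d') (d + a • d')).eval t := by
      intro t
      rw [pencil_eval']
      congr 2
      module
    simp only [he]
    by_cases h : pencil f (u + c • d') (d + a • d') = 0
    · left
      intro t
      rw [h, Polynomial.eval_zero]
    · right
      exact card_zeros_le h (S.deg_le _ (π.add_mem hd (π.smul_mem a hd'))))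
  refine ⟨-a, fun s t => ?_⟩
  have hm : (-(a * t)) • d' ∈ π := π.smul_mem _ hd'
  have h1 := S.deg_le (u + t • d) hd'
  have h2 := S.deg_le (u + (-(a * t)) • d') hd'
  have c1 : (pencil f (u + t • d) d').coeff q = Bco q f d' u :=
    S.B_add_pi u (π.smul_mem t hd) hd'
  have c2 : (pencil f (u + (-(a * t)) • d') d').coeff q = Bco q f d' u :=
    S.B_add_pi u hm hd'
  have hz : pencil f (u + t • d) d' - pencil f (u + (-(a * t)) • d') d' = 0 := by
    by_contra hne
    have hdeg : (pencil f (u + t • d) d' - pencil f (u + (-(a * t)) • d') d').natDegree ≤ q - 1 := by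
      have h3 := (Polynomial.natDegree_sub_le (pencil f (u + t • d) d')
        (pencil f (u + (-(a * t)) • d') d')).trans (max_le h1 h2)
      by_contra hlt
      have h4 : (pencil f (u + t • d) d' - pencil f (u + (-(a * t)) • d') d').natDegree = q := by
        omega
      apply hne
      rw [← Polynomial.leadingCoeff_eq_zero, Polynomial.leadingCoeff, h4, Polynomial.coeff_sub,
        c1, c2, sub_self]
    have h5 := card_zeros_le hne hdeg
    have h6 := hcol t
    have h7 : (Finset.univ.filter fun s : F => aeval (u + t • d + s • d') f = 0).card ≤ q - 1 := by
      refine le_trans (Finset.card_le_card ?_) h5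
      intro s hs
      have hs' := (Finset.mem_filter.1 hs).2
      refine Finset.mem_filter.2 ⟨Finset.mem_univ _, ?_⟩
      have h8 := (ha s t).1 hs'
      rw [Polynomial.eval_sub, pencil_eval', pencil_eval', hs', zero_sub, neg_eq_zero, ← h8]
      congr 2
      module
    have := S.hq
    omega
  have := congrArg (Polynomial.eval s) hz
  rw [Polynomial.eval_sub, pencil_eval', pencil_eval', Polynomial.eval_zero, sub_eq_zero] at this
  rw [this]
  congr 2
  module

theorem step4_coeff (S : Setup q f W π) {u d d' : Fin 7 → F} (hu : u ∉ W) (hd : d ∈ π)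
    (hd' : d' ∈ π) (hB : Bco q f d' u ≠ 0) :
    ∃ c : F, ∀ k, (pencil f u d).coeff k = (pencil f u d').coeff k * c ^ k := by
  obtain ⟨c, hc⟩ := S.step4 hu hd hd' hB
  refine ⟨c, fun k => ?_⟩
  have hz : pencil f u d - (pencil f u d').comp (Polynomial.C c * Polynomial.X) = 0 := by
    refine poly_zero_of_forall ?_ fun t => ?_
    · refine lt_of_le_of_lt (Polynomial.natDegree_sub_le _ _) (max_lt ?_ ?_)
      · exact (S.deg_le u hd).trans_lt (by have := S.lt_card; omega)
      · refine lt_of_le_of_lt Polynomial.natDegree_comp_le ?_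
        refine lt_of_le_of_lt (Nat.mul_le_mul (S.deg_le u hd')
          ((Polynomial.natDegree_C_mul_le c _).trans Polynomial.natDegree_X_le)) ?_
        have := S.lt_card
        omega
    · rw [Polynomial.eval_sub, Polynomial.eval_comp, pencil_eval', pencil_eval']
      have := hc 0 t
      rw [zero_smul, add_zero, zero_add] at this
      rw [this]
      simp only [Polynomial.eval_mul, Polynomial.eval_C, Polynomial.eval_X]
      rw [mul_comm, sub_self]
  rw [sub_eq_zero] at hz
  rw [hz, Polynomial.comp_C_mul_X_coeff]

end Setup
end

section
theorem finrank_sup_span {F V : Type} [Field F] [AddCommGroup V] [Module F V]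
    [FiniteDimensional F V] (U : Submodule F V) {u : V} (hu : u ∉ U) :
    finrank F ↥(U ⊔ Submodule.span F {u}) = finrank F U + 1 := by
  have hu0 : u ≠ 0 := by rintro rfl; exact hu U.zero_mem
  have h1 := Submodule.finrank_sup_add_finrank_inf_eq U (Submodule.span F {u})
  have h2 : U ⊓ Submodule.span F {u} = ⊥ := by
    rw [← disjoint_iff, Submodule.disjoint_span_singleton' hu0]; exact hu
  rw [h2, finrank_bot, finrank_span_singleton hu0] at h1
  omega

theorem exists_mem_not_mem {F V : Type} [Field F] [AddCommGroup V] [Module F V]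
    [FiniteDimensional F V] {U K : Submodule F V} (h : finrank F U < finrank F K) :
    ∃ v ∈ K, v ∉ U := by
  by_contra hcon
  push Not at hcon
  exact absurd (Submodule.finrank_mono (show K ≤ U from hcon)) (by omega)

namespace Setup
variable {q : ℕ} {F : Type} [Field F] [Fintype F] {f : MvPolynomial (Fin 7) F}
    {W π : Submodule F (Fin 7 → F)}

theorem pow_card (S : Setup q f W π) (a : F) : (a ^ q) ^ q = a := by
  rw [← pow_mul, ← sq, ← S.hcard, FiniteField.pow_card]

theorem neg_pow' (S : Setup q f W π) (a : F) : (-a) ^ q = -a ^ q := by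
  have h := S.frob a (-a)
  rw [add_neg_cancel, zero_pow (by have := S.hq; omega)] at h
  exact (neg_eq_of_add_eq_zero_right h.symm).symm

theorem sub_pow' (S : Setup q f W π) (a b : F) : (a - b) ^ q = a ^ q - b ^ q := by
  rw [sub_eq_add_neg, S.frob, S.neg_pow', ← sub_eq_add_neg]

/-- `B d` as a linear form -/
noncomputable def Bl (S : Setup q f W π) (d : Fin 7 → F) : (Fin 7 → F) →ₗ[F] F where
  toFun u := Bco q f d u
  map_add' := S.B_add d
  map_smul' c u := by rw [S.B_smul]; rfl

theorem finrank_ker_ge {F V : Type} [Field F] [AddCommGroup V] [Module F V] [FiniteDimensional F V]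
    (l : V →ₗ[F] F) : finrank F V ≤ finrank F (LinearMap.ker l) + 1 := by
  have h := LinearMap.finrank_range_add_finrank_ker l
  have h2 : finrank F (LinearMap.range l) ≤ 1 := by
    have := Submodule.finrank_le (LinearMap.range l)
    rwa [finrank_self] at this
  omega

theorem step4_id (S : Setup q f W π) {u d d' : Fin 7 → F} (hu : u ∉ W) (hd : d ∈ π)
    (hd' : d' ∈ π) (hB : Bco q f d' u ≠ 0) (k : ℕ) :
    (pencil f u d).coeff k * Bco q f d' u ^ (q * k) =
      (pencil f u d').coeff k * Bco q f d u ^ (q * k) := by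
  obtain ⟨c, hc⟩ := S.step4_coeff hu hd hd' hB
  have h1 : Bco q f d u = Bco q f d' u * c ^ q := hc q
  rw [hc k, h1, pow_mul (_ * _), mul_pow, S.pow_card, mul_pow, ← pow_mul]
  ring

theorem exists_w (S : Setup q f W π) {u : Fin 7 → F} (hu : u ∉ W) (d : Fin 7 → F) :
    ∃ w, Bco q f d w = 0 ∧ w ∉ W ⊔ Submodule.span F {u} := by
  have h1 := finrank_ker_ge (S.Bl d)
  rw [Module.finrank_fin_fun] at h1
  have h2 := finrank_sup_span W hu
  rw [S.hW] at h2
  obtain ⟨v, hv, hv'⟩ := exists_mem_not_mem (U := W ⊔ Submodule.span F {u})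
    (K := LinearMap.ker (S.Bl d)) (by omega)
  exact ⟨v, hv, hv'⟩

theorem line_avoid {u w : Fin 7 → F} (hu : u ∉ W) (hw : w ∉ W ⊔ Submodule.span F {u}) (s : F) :
    u + s • w ∉ W := by
  intro h
  by_cases hs : s = 0
  · rw [hs, zero_smul, add_zero] at h; exact hu h
  · apply hw
    have : w = s⁻¹ • ((u + s • w) - u) := by
      rw [add_sub_cancel_left, smul_smul, inv_mul_cancel₀ hs, one_smul]
    rw [this]
    refine Submodule.smul_mem _ _ (Submodule.sub_mem _ (Submodule.mem_sup_left h)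
      (Submodule.mem_sup_right (Submodule.mem_span_singleton_self u)))

theorem stepA (S : Setup q f W π) {u d' w : Fin 7 → F} (hu : u ∉ W) (hd' : d' ∈ π)
    (hB : Bco q f d' u ≠ 0) (hBw : Bco q f d' w = 0) (hw : w ∉ W ⊔ Submodule.span F {u})
    {k : ℕ} (hk1 : 1 ≤ k) (hk : k ≤ q - 1) :
    (2 ≤ k → (pencil f u d').coeff k = 0) ∧
      (k = 1 → (pencil f (u + w) d').coeff k = (pencil f u d').coeff k) := by
  have hq := S.hq
  have hwW : w ∉ W := fun h => hw (Submodule.mem_sup_left h)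
  obtain ⟨d, hd, hγ⟩ := S.exists_B hwW
  set b := Bco q f d' u with hb
  set γ := Bco q f d w with hγd
  set β := Bco q f d u with hβ
  let PP : (Fin 7 → F) → Polynomial F := fun d =>
    (pencil f (fun i => Polynomial.C (u i) + Polynomial.C (w i) * Polynomial.X)
      (fun i => Polynomial.C (d i))).coeff k
  have hPe : ∀ d s, (PP d).eval s = (pencil f (u + s • w) d).coeff k := by
    intro d s
    have := pencil_nested f u w d k s
    refine this.trans ?_
    congr 2
    funext i
    rw [Pi.add_apply, Pi.smul_apply, smul_eq_mul, mul_comm]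
  have hPd : ∀ d, (PP d).natDegree ≤ q + 1 - k := by
    intro d
    by_cases h : PP d = 0
    · rw [h]; simp
    · have := pencil_bd S.hf u w d k h
      have h' : (PP d).natDegree + k ≤ q + 1 := this
      omega
  have hlin : (Polynomial.C β + Polynomial.C γ * Polynomial.X).natDegree = 1 := by
    rw [add_comm]; exact Polynomial.natDegree_linear hγ
  have hlin0 : (Polynomial.C β + Polynomial.C γ * Polynomial.X) ≠ 0 := by
    intro h; rw [h] at hlin; simp at hlin
  have harith : q + 1 - k + q * k < q ^ 2 := by
    obtain ⟨m, rfl⟩ : ∃ m, q = k + 1 + m := ⟨q - 1 - k, by omega⟩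
    have : k + 1 + m + 1 - k = m + 2 := by omega
    rw [this]
    rcases Nat.eq_zero_or_pos m with rfl | hm
    · nlinarith
    · nlinarith
  have hpoly : PP d * Polynomial.C (b ^ (q * k)) -
      PP d' * (Polynomial.C β + Polynomial.C γ * Polynomial.X) ^ (q * k) = 0 := by
    refine poly_zero_of_forall ?_ fun s => ?_
    · rw [S.hcard]
      refine lt_of_le_of_lt (Polynomial.natDegree_sub_le _ _) (max_lt ?_ ?_)
      · refine lt_of_le_of_lt (Polynomial.natDegree_mul_C_le _ _) ?_
        exact (hPd d).trans_lt (lt_of_le_of_lt (Nat.le_add_right _ _) harith)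
      · refine lt_of_le_of_lt Polynomial.natDegree_mul_le ?_
        refine lt_of_le_of_lt (Nat.add_le_add (hPd d') ?_) harith
        rw [Polynomial.natDegree_pow, hlin, mul_one]
    · have e1 : Bco q f d' (u + s • w) = b := by
        rw [S.B_add, S.B_smul, hBw, mul_zero, add_zero]
      have e2 : Bco q f d (u + s • w) = β + γ * s := by
        rw [S.B_add, S.B_smul, mul_comm]
      have := S.step4_id (line_avoid hu hw s) hd hd' (by rw [e1]; exact hB) k
      rw [e1, e2] at this
      simp only [Polynomial.eval_sub, Polynomial.eval_mul, Polynomial.eval_pow,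
        Polynomial.eval_add, Polynomial.eval_C, Polynomial.eval_X]
      rw [hPe, hPe, this, sub_self]
  rw [sub_eq_zero] at hpoly
  have hdegE : PP d' ≠ 0 → (PP d').natDegree + q * k ≤ q + 1 - k := by
    intro hne
    have h1 := Polynomial.natDegree_mul hne (pow_ne_zero (q * k) hlin0)
    rw [← hpoly, Polynomial.natDegree_pow, hlin, mul_one] at h1
    rw [← h1]
    exact (Polynomial.natDegree_mul_C_le _ _).trans (hPd d)
  have e0 : (PP d').eval 0 = (pencil f u d').coeff k := by
    rw [hPe, zero_smul, add_zero]
  have e1 : (PP d').eval 1 = (pencil f (u + w) d').coeff k := by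
    rw [hPe, one_smul]
  constructor
  · intro hk2
    rw [← e0]
    by_cases hne : PP d' = 0
    · rw [hne, Polynomial.eval_zero]
    · have := hdegE hne
      exfalso
      have : q * 2 ≤ q * k := Nat.mul_le_mul_left _ hk2
      omega
  · rintro rfl
    rw [← e0, ← e1]
    by_cases hne : PP d' = 0
    · rw [hne, Polynomial.eval_zero, Polynomial.eval_zero]
    · have := hdegE hne
      have h0 : (PP d').natDegree = 0 := by omega
      rw [Polynomial.eq_C_of_natDegree_eq_zero h0, Polynomial.eval_C, Polynomial.eval_C]

theorem coeff_vanish (S : Setup q f W π) {u d : Fin 7 → F} (hu : u ∉ W) (hd : d ∈ π)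
    (hB : Bco q f d u ≠ 0) {k : ℕ} (hk2 : 2 ≤ k) (hk : k ≤ q - 1) :
    (pencil f u d).coeff k = 0 := by
  obtain ⟨w, h1, h2⟩ := S.exists_w hu d
  exact (S.stepA hu hd hB h1 h2 (by omega) hk).1 hk2

theorem coeff_one_eq (S : Setup q f W π) {u d w : Fin 7 → F} (hu : u ∉ W) (hd : d ∈ π)
    (hB : Bco q f d u ≠ 0) (hBw : Bco q f d w = 0) (hw : w ∉ W ⊔ Submodule.span F {u}) :
    (pencil f (u + w) d).coeff 1 = (pencil f u d).coeff 1 :=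
  (S.stepA hu hd hB hBw hw le_rfl (by have := S.hq; omega)).2 rfl

theorem pencil_shape (S : Setup q f W π) {u d : Fin 7 → F} (hu : u ∉ W) (hd : d ∈ π)
    (hB : Bco q f d u ≠ 0) (t : F) :
    aeval (u + t • d) f = aeval u f + (pencil f u d).coeff 1 * t + Bco q f d u * t ^ q := by
  have hq := S.hq
  rw [← pencil_eval', Polynomial.eval_eq_sum_range' (n := q + 1)
    (by have := S.deg_le u hd; omega), Finset.sum_range_succ,
    ← Finset.sum_range_add_sum_Ico _ (show 2 ≤ q by omega)]
  rw [Finset.sum_eq_zero (s := Finset.Ico 2 q)]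
  · rw [Finset.sum_range_succ, Finset.sum_range_succ, Finset.sum_range_zero, pencil_coeff_zero]
    rw [pow_zero, pow_one, mul_one, zero_add, add_zero]
    rfl
  · intro k hk
    rw [Finset.mem_Ico] at hk
    rw [S.coeff_vanish hu hd hB hk.1 (by omega), zero_mul]

theorem coeff_one_smul (S : Setup q f W π) (c : F) (u d : Fin 7 → F) :
    (pencil f (c • u) d).coeff 1 = c ^ q * (pencil f u d).coeff 1 := by
  rw [pencil_coeff_one, pencil_coeff_one, Finset.mul_sum]
  refine Finset.sum_congr rfl fun i _ => ?_
  have h := S.hf.pderiv (i := i)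
  rw [Nat.add_sub_cancel] at h
  rw [aeval_smul_hom h]
  ring

theorem link (S : Setup q f W π) {u₁ u₂ d : Fin 7 → F} (h₁ : u₁ ∉ W) (h₂ : u₂ ∉ W) (hd : d ∈ π)
    (hB₁ : Bco q f d u₁ ≠ 0) (hB₂ : Bco q f d u₂ ≠ 0) :
    (pencil f u₁ d).coeff 1 * Bco q f d u₂ ^ q = (pencil f u₂ d).coeff 1 * Bco q f d u₁ ^ q := by
  have main : ∀ u : Fin 7 → F, u ∉ W → Bco q f d u = Bco q f d u₁ →
      (pencil f u d).coeff 1 = (pencil f u₁ d).coeff 1 := by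
    intro u hu hB
    have hw0 : Bco q f d (u - u₁) = 0 := by
      have := S.B_add d (u - u₁) u₁
      rw [sub_add_cancel, hB] at this
      simpa using this
    by_cases hw : u - u₁ ∈ W ⊔ Submodule.span F {u₁}
    · obtain ⟨w, hBw, hwn⟩ := S.exists_w h₁ d
      have e1 := S.coeff_one_eq h₁ hd hB₁ hBw hwn
      have e2 := S.coeff_one_eq (w := w - (u - u₁)) hu hd (by rw [hB]; exact hB₁) (by
        have := S.B_add d (w - (u - u₁)) (u - u₁)
        rw [sub_add_cancel, hBw, hw0, add_zero] at this
        exact this.symm) (by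
        intro hmem
        apply hwn
        have hle : W ⊔ Submodule.span F {u} ≤ W ⊔ Submodule.span F {u₁} := by
          refine sup_le le_sup_left ?_
          rw [Submodule.span_singleton_le_iff_mem]
          have := Submodule.add_mem _ hw (Submodule.mem_sup_right (S := W)
            (Submodule.mem_span_singleton_self (R := F) u₁))
          rwa [sub_add_cancel] at this
        have := Submodule.add_mem _ (hle hmem) hw
        rwa [sub_add_cancel] at this)
      rw [← e1, ← e2]
      congr 2
      abel
    · have := S.coeff_one_eq h₁ hd hB₁ hw0 hw
      rwa [add_sub_cancel] at this
  have hc : Bco q f d u₁ / Bco q f d u₂ ≠ 0 := div_ne_zero hB₁ hB₂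
  have := main ((Bco q f d u₁ / Bco q f d u₂) • u₂) (fun h => h₂ (by
    rwa [Submodule.smul_mem_iff _ hc] at h)) (by rw [S.B_smul]; field_simp)
  rw [S.coeff_one_smul, div_pow] at this
  rw [← this]
  have := pow_ne_zero q hB₂
  field_simp

/-- the invariant `e` -/
def Pe (q : ℕ) (f : MvPolynomial (Fin 7) F) (π : Submodule F (Fin 7 → F)) (e : F)
    (u : Fin 7 → F) : Prop :=
  ∀ d ∈ π, (pencil f u d).coeff 1 = e * Bco q f d u ^ q

theorem Pe_of (S : Setup q f W π) {u d : Fin 7 → F} (hu : u ∉ W) (hd : d ∈ π)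
    (hB : Bco q f d u ≠ 0) {e : F} (h : (pencil f u d).coeff 1 = e * Bco q f d u ^ q) :
    Pe q f π e u := by
  intro d' hd'
  have := S.step4_id hu hd' hd hB 1
  rw [mul_one, h] at this
  have hne := pow_ne_zero q hB
  apply mul_right_cancel₀ hne
  rw [this]; ring

theorem Pe_link (S : Setup q f W π) {u₁ u₂ d : Fin 7 → F} (h₁ : u₁ ∉ W) (h₂ : u₂ ∉ W) (hd : d ∈ π)
    (hB₁ : Bco q f d u₁ ≠ 0) (hB₂ : Bco q f d u₂ ≠ 0) {e : F} (h : Pe q f π e u₁) :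
    Pe q f π e u₂ := by
  refine S.Pe_of h₂ hd hB₂ ?_
  have := S.link h₁ h₂ hd hB₁ hB₂
  rw [h d hd] at this
  have hne := pow_ne_zero q hB₁
  apply mul_right_cancel₀ hne
  rw [← this]; ring

theorem Pe_const (S : Setup q f W π) {u₁ u₂ : Fin 7 → F} (h₁ : u₁ ∉ W) (h₂ : u₂ ∉ W)
    {e : F} (h : Pe q f π e u₁) : Pe q f π e u₂ := by
  classical
  obtain ⟨d₁, hd₁, hB₁⟩ := S.exists_B h₁
  obtain ⟨d₂, hd₂, hB₂⟩ := S.exists_B h₂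
  by_cases c1 : Bco q f d₁ u₂ = 0
  · by_cases c2 : Bco q f d₂ u₁ = 0
    · have : ∃ a : F, a ≠ 0 ∧ u₁ + a • u₂ ∉ W := by
        by_cases h3 : u₁ + u₂ ∈ W
        · obtain ⟨a, ha⟩ : ∃ a : F, a ∉ ({0, 1} : Finset F) := by
            by_contra hcon
            push Not at hcon
            have h5 : (Finset.univ : Finset F).card ≤ ({0, 1} : Finset F).card :=
              Finset.card_le_card fun a _ => hcon a
            have h6 := Finset.card_le_two (a := (0 : F)) (b := 1)
            have h7 := S.lt_card
            have h8 := S.hq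
            rw [Finset.card_univ] at h5
            omega
          rw [Finset.mem_insert, Finset.mem_singleton, not_or] at ha
          refine ⟨a, ha.1, fun h4 => h₂ ?_⟩
          have h5 := W.sub_mem h4 h3
          have h6 : u₁ + a • u₂ - (u₁ + u₂) = (a - 1) • u₂ := by module
          rw [h6, Submodule.smul_mem_iff _ (sub_ne_zero.2 ha.2)] at h5
          exact h5
        · exact ⟨1, one_ne_zero, by rwa [one_smul]⟩
      obtain ⟨a, ha, h3⟩ := this
      have e1 : Pe q f π e (u₁ + a • u₂) := S.Pe_link h₁ h3 hd₁ hB₁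
        (by rw [S.B_add, S.B_smul, c1, mul_zero, add_zero]; exact hB₁) h
      exact S.Pe_link h3 h₂ hd₂
        (by rw [S.B_add, S.B_smul, c2, zero_add]; exact mul_ne_zero ha hB₂) hB₂ e1
    · exact S.Pe_link h₁ h₂ hd₂ c2 hB₂ h
  · exact S.Pe_link h₁ h₂ hd₁ hB₁ c1 h

end Setup
end

section
namespace Setup
variable {q : ℕ} {F : Type} [Field F] [Fintype F] {f : MvPolynomial (Fin 7) F}
    {W π : Submodule F (Fin 7 → F)}

theorem exists_not_mem (S : Setup q f W π) : ∃ w, w ∉ W := by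
  obtain ⟨v, -, hv⟩ := exists_mem_not_mem (U := W) (K := (⊤ : Submodule F (Fin 7 → F)))
    (by rw [finrank_top, S.hW, Module.finrank_fin_fun]; norm_num)
  exact ⟨v, hv⟩

theorem exists_iota (S : Setup q f W π) : ∃ i : F, i ≠ 0 ∧ i ^ q = -i := by
  have hq := S.hq
  have : ∃ x : F, x ^ q - x ≠ 0 := by
    by_contra hcon
    push Not at hcon
    have hd : (Polynomial.X ^ q - Polynomial.X : Polynomial F).natDegree = q :=
      FiniteField.X_pow_card_sub_X_natDegree_eq F (by omega)
    have h0 : (Polynomial.X ^ q - Polynomial.X : Polynomial F) = 0 := by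
      refine poly_zero_of_forall ?_ fun t => ?_
      · rw [hd]; have := S.lt_card; omega
      · rw [Polynomial.eval_sub, Polynomial.eval_pow, Polynomial.eval_X]; exact hcon t
    rw [h0, Polynomial.natDegree_zero] at hd
    omega
  obtain ⟨x, hx⟩ := this
  refine ⟨x ^ q - x, hx, ?_⟩
  rw [S.sub_pow', S.pow_card]; ring

/-- polynomials of degree at most `q+1` taking values in the subfield -/
theorem real_poly (S : Setup q f W π) (p : Polynomial F) (hp : p.natDegree ≤ q + 1)
    (h : ∀ s : F, s ≠ 0 → p.eval s ^ q = p.eval s) :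
    p.coeff 0 ^ q = p.coeff 0 ∧ p.coeff q = p.coeff 1 ^ q := by
  have hq := S.hq
  set Ψ : Polynomial F := ∑ j ∈ Finset.range q, Polynomial.C (p.coeff j ^ q) * Polynomial.X ^ (q * j)
    + Polynomial.C (p.coeff q ^ q) * Polynomial.X
    + Polynomial.C (p.coeff (q + 1) ^ q) * Polynomial.X ^ (q + 1) - p with hΨ
  have hsum : ∀ s : F, p.eval s ^ q = ∑ j ∈ Finset.range (q + 2), p.coeff j ^ q * (s ^ j) ^ q := by
    intro s
    rw [Polynomial.eval_eq_sum_range' (n := q + 2) (by omega)]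
    have key : ∀ (n : ℕ) (g : ℕ → F), (∑ j ∈ Finset.range n, g j) ^ q =
        ∑ j ∈ Finset.range n, g j ^ q := by
      intro n g
      induction n with
      | zero => simp; omega
      | succ n ih => rw [Finset.sum_range_succ, Finset.sum_range_succ, S.frob, ih]
    rw [key]
    exact Finset.sum_congr rfl fun j _ => mul_pow _ _ _
  have hev : ∀ s : F, Ψ.eval s = p.eval s ^ q - p.eval s := by
    intro s
    rw [hsum, hΨ, Polynomial.eval_sub, Finset.sum_range_succ, Finset.sum_range_succ]
    simp only [Polynomial.eval_add, Polynomial.eval_mul, Polynomial.eval_C, Polynomial.eval_pow,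
      Polynomial.eval_X, Polynomial.eval_finsetSum]
    congr 2
    · congr 1
      · refine Finset.sum_congr rfl fun j _ => ?_
        rw [← pow_mul, mul_comm q j]
      · rw [S.pow_card]
    · rw [pow_succ s q, mul_pow, S.pow_card, mul_comm s]
  have hz : Polynomial.X * Ψ = 0 := by
    refine poly_zero_of_forall ?_ fun s => ?_
    · have hdeg : Ψ.natDegree ≤ q ^ 2 - 2 := by
        have e1 : q + 1 ≤ q ^ 2 - 2 := by
          have : q + 3 ≤ q ^ 2 := by nlinarith
          omega
        have e2 : ∀ j ∈ Finset.range q, q * j ≤ q ^ 2 - 2 := by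
          intro j hj
          have hj := Finset.mem_range.1 hj
          have h1 : q * j ≤ q * (q - 1) := Nat.mul_le_mul_left _ (by omega)
          have h2 : q * (q - 1) + q = q ^ 2 := by
            obtain ⟨m, rfl⟩ : ∃ m, q = m + 1 := ⟨q - 1, by omega⟩
            rw [Nat.add_sub_cancel]; ring
          omega
        rw [hΨ]
        refine (Polynomial.natDegree_sub_le _ _).trans (max_le ?_ (hp.trans e1))
        refine Polynomial.natDegree_add_le_of_degree_le (Polynomial.natDegree_add_le_of_degree_le
          ?_ ?_) ?_
        · refine Polynomial.natDegree_sum_le_of_forall_le _ _ fun j hj => ?_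
          exact (Polynomial.natDegree_C_mul_X_pow_le _ _).trans (e2 j hj)
        · refine (Polynomial.natDegree_C_mul_le _ _).trans (Polynomial.natDegree_X_le.trans ?_)
          omega
        · exact (Polynomial.natDegree_C_mul_X_pow_le _ _).trans e1
      rw [S.hcard]
      refine lt_of_le_of_lt Polynomial.natDegree_mul_le ?_
      rw [Polynomial.natDegree_X]
      have : 9 ≤ q ^ 2 := by nlinarith
      omega
    · rw [Polynomial.eval_mul, Polynomial.eval_X]
      by_cases hs : s = 0
      · rw [hs, zero_mul]
      · rw [hev, h s hs, sub_self, mul_zero]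
  have hΨ0 : Ψ = 0 := (mul_eq_zero.1 hz).resolve_left Polynomial.X_ne_zero
  constructor
  · have := hev 0
    rw [hΨ0, Polynomial.eval_zero, ← Polynomial.coeff_zero_eq_eval_zero] at this
    exact (sub_eq_zero.1 this.symm)
  · have hc := congrArg (fun P => Polynomial.coeff P q) hΨ0
    simp only [hΨ, Polynomial.coeff_sub, Polynomial.coeff_add, Polynomial.finsetSum_coeff,
      Polynomial.coeff_X_pow, Polynomial.coeff_zero, Polynomial.coeff_C_mul] at hc
    rw [Polynomial.coeff_X_of_ne_one (by omega), if_neg (show ¬ q = q + 1 by omega), mul_zero,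
      mul_zero, add_zero, add_zero, Finset.sum_eq_single 1, mul_one, if_pos rfl, mul_one] at hc
    · exact (sub_eq_zero.1 hc).symm
    · intro j _ hj
      rw [if_neg, mul_zero]
      intro h'
      apply hj
      have : q * 1 = q * j := by rw [mul_one]; exact h'
      exact (Nat.eq_of_mul_eq_mul_left (by omega) this).symm
    · intro h'
      exact absurd (Finset.mem_range.2 (by omega)) h'

theorem exists_lambda (S : Setup q f W π) :
    ∃ l : F, l ≠ 0 ∧ ∀ v : Fin 7 → F, (l * aeval v f) ^ q = l * aeval v f := by
  classical
  have hq := S.hq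
  obtain ⟨u₀, hu₀⟩ := S.exists_not_mem
  obtain ⟨d₀, hd₀, hB₀⟩ := S.exists_B hu₀
  obtain ⟨i, hi0, hi⟩ := S.exists_iota
  set b := Bco q f d₀ u₀ with hb
  set e := (pencil f u₀ d₀).coeff 1 / b ^ q with he
  have hbq : b ^ q ≠ 0 := pow_ne_zero q hB₀
  have hPe : Pe q f π e u₀ := S.Pe_of hu₀ hd₀ hB₀ (by rw [he, ← hb]; field_simp)
  have hroots : ∀ u d : Fin 7 → F, u ∉ W → d ∈ π → Bco q f d u ≠ 0 →
      (Finset.univ.filter fun t : F => aeval (u + t • d) f = 0).card = q := by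
    intro u d hu hd hB
    have := S.line_eq hd hB (S.Nz_eq_pow hu) π.zero_mem
    rwa [add_zero] at this
  obtain ⟨t₁, ht₁, t₂, ht₂, hne⟩ := Finset.one_lt_card.1 (by
    rw [hroots u₀ d₀ hu₀ hd₀ hB₀]; omega)
  have hr : e * b ^ q * (t₁ - t₂) + b * (t₁ - t₂) ^ q = 0 := by
    have h1 := (Finset.mem_filter.1 ht₁).2
    have h2 := (Finset.mem_filter.1 ht₂).2
    rw [S.pencil_shape hu₀ hd₀ hB₀, hPe d₀ hd₀] at h1 h2
    rw [S.sub_pow']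
    linear_combination h1 - h2
  set r := t₁ - t₂ with hrd
  have hr0 : r ≠ 0 := sub_ne_zero.2 hne
  set l := i * r / b with hl
  have hl0 : l ≠ 0 := div_ne_zero (mul_ne_zero hi0 hr0) hB₀
  have hle : l ^ q = l * e := by
    rw [hl, div_pow, mul_pow, hi]
    have : e = - (b * r ^ q) / (b ^ q * r) := by
      field_simp
      linear_combination hr
    rw [this]
    field_simp
  have hout : ∀ v : Fin 7 → F, v ∉ W → (l * aeval v f) ^ q = l * aeval v f := by
    intro u hu
    obtain ⟨d, hd, hB⟩ := S.exists_B hu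
    have hPu := S.Pe_const hu₀ hu hPe
    have hpos : 0 < (Finset.univ.filter fun t : F => aeval (u + t • d) f = 0).card := by
      rw [hroots u d hu hd hB]; omega
    obtain ⟨t, ht⟩ := Finset.card_pos.1 hpos
    have ht' := (Finset.mem_filter.1 ht).2
    rw [S.pencil_shape hu hd hB, hPu d hd] at ht'
    set m := l * Bco q f d u * t ^ q with hm
    have hmq : m ^ q = l * e * Bco q f d u ^ q * t := by
      rw [hm, mul_pow, mul_pow, S.pow_card, hle]
    have hlf : l * aeval u f = -(m ^ q + m) := by
      rw [hmq, hm]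
      linear_combination l * ht'
    rw [hlf, S.neg_pow', S.frob, S.pow_card, add_comm]
  refine ⟨l, hl0, fun v => ?_⟩
  by_cases hv : v ∈ W
  · have h := S.real_poly (Polynomial.C l * pencil f v u₀)
      ((Polynomial.natDegree_C_mul_le _ _).trans (pencil_top S.hf v u₀).1) (by
      intro s hs
      rw [Polynomial.eval_mul, Polynomial.eval_C, pencil_eval']
      refine hout _ fun hmem => hu₀ ?_
      have := W.sub_mem hmem hv
      rwa [add_sub_cancel_left, Submodule.smul_mem_iff _ hs] at this)
    have h1 := h.1
    rw [Polynomial.coeff_C_mul, pencil_coeff_zero] at h1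
    exact h1
  · exact hout v hv

end Setup
end

section
theorem finrank_inf_ker {F V : Type} [Field F] [AddCommGroup V] [Module F V]
    [FiniteDimensional F V] (K : Submodule F V) (l : V →ₗ[F] F) {x : V} (hx : x ∈ K)
    (hl : l x ≠ 0) : finrank F ↥(K ⊓ LinearMap.ker l) + 1 = finrank F K := by
  have h2 : x ∉ K ⊓ LinearMap.ker l := fun h => hl h.2
  have h3 : (K ⊓ LinearMap.ker l) ⊔ Submodule.span F {x} = K := by
    apply le_antisymm
    · refine sup_le inf_le_left ?_
      rw [Submodule.span_singleton_le_iff_mem]; exact hx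
    · intro v hv
      rw [Submodule.mem_sup]
      refine ⟨v - (l v / l x) • x, ⟨K.sub_mem hv (K.smul_mem _ hx), ?_⟩, (l v / l x) • x,
        Submodule.smul_mem _ _ (Submodule.mem_span_singleton_self x), sub_add_cancel _ _⟩
      change l _ = 0
      rw [map_sub, map_smul, smul_eq_mul, div_mul_cancel₀ _ hl, sub_self]
  rw [← finrank_sup_span _ h2, h3]

theorem count_points {F : Type} [Field F] [Fintype F] {n : ℕ} (A : (Fin n → F) → Prop) (h0 : A 0)
    (hA : ∀ (c : F) v, c ≠ 0 → (A (c • v) ↔ A v)) (X : Set (Projectivization F (Fin n → F)))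
    (hX : ∀ P, P ∈ X ↔ A P.rep) :
    Nat.card {v : Fin n → F // A v} = (Fintype.card F - 1) * X.ncard + 1 := by
  classical
  let φ : Option (X × Fˣ) → {v : Fin n → F // A v} := fun o => o.elim ⟨0, h0⟩ (fun p =>
    ⟨(p.2 : F) • (p.1 : Projectivization F (Fin n → F)).rep,
      (hA _ _ p.2.ne_zero).2 ((hX _).1 p.1.2)⟩)
  have hφ : Function.Bijective φ := by
    constructor
    · rintro (_ | ⟨P, c⟩) (_ | ⟨P', c'⟩) h
      · rfl
      · have h1 := congrArg Subtype.val h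
        have h2 : (0 : Fin n → F) = (c' : F) • (P' : Projectivization F (Fin n → F)).rep := h1
        exact absurd h2.symm (smul_ne_zero c'.ne_zero (Projectivization.rep_nonzero _))
      · have h1 := congrArg Subtype.val h
        have h2 : (c : F) • (P : Projectivization F (Fin n → F)).rep = 0 := h1
        exact absurd h2 (smul_ne_zero c.ne_zero (Projectivization.rep_nonzero _))
      · have h1 : (c : F) • (P : Projectivization F (Fin n → F)).rep =
            (c' : F) • (P' : Projectivization F (Fin n → F)).rep := congrArg Subtype.val h
        have hP : (P : Projectivization F (Fin n → F)) = P' := by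
          rw [← Projectivization.mk_rep (P : Projectivization F (Fin n → F)),
            ← Projectivization.mk_rep (P' : Projectivization F (Fin n → F)),
            Projectivization.mk_eq_mk_iff']
          refine ⟨(c : F)⁻¹ * c', ?_⟩
          rw [mul_smul, ← h1, smul_smul, inv_mul_cancel₀ c.ne_zero, one_smul]
        have hP' : P = P' := Subtype.ext hP
        subst hP'
        have hc : (c : F) = c' := by
          have := sub_eq_zero.2 h1
          rw [← sub_smul] at this
          exact sub_eq_zero.1 ((smul_eq_zero.1 this).resolve_right
            (Projectivization.rep_nonzero _))
        rw [Units.ext hc]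
    · rintro ⟨v, hv⟩
      by_cases hv0 : v = 0
      · exact ⟨none, Subtype.ext hv0.symm⟩
      · obtain ⟨a, ha⟩ := Projectivization.exists_smul_eq_mk_rep F v hv0
        have ha' : (a : F) • v = (Projectivization.mk F v hv0).rep := ha
        refine ⟨some (⟨Projectivization.mk F v hv0, (hX _).2 ?_⟩, a⁻¹), Subtype.ext ?_⟩
        · rw [← ha', hA _ _ a.ne_zero]; exact hv
        · change ((a⁻¹ : Fˣ) : F) • (Projectivization.mk F v hv0).rep = v
          rw [← ha', smul_smul, Units.inv_mul, one_smul]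
  rw [← Nat.card_congr (Equiv.ofBijective φ hφ), Finite.card_option, Nat.card_prod,
    Nat.card_units, Nat.card_eq_fintype_card (α := F), Nat.card_coe_set_eq, mul_comm]

namespace Setup
variable {q : ℕ} {F : Type} [Field F] [Fintype F] {f : MvPolynomial (Fin 7) F}
    {W π : Submodule F (Fin 7 → F)}

theorem B_self (S : Setup q f W π) (v : Fin 7 → F) : Bco q f v v = aeval v f := by
  rw [S.B_eq]
  have h := congrArg (aeval v) S.hf.sum_X_mul_pderiv
  rw [map_sum, map_nsmul, nsmul_eq_mul, Nat.cast_add, S.hqF, Nat.cast_one, zero_add, one_mul] at h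
  rw [← h]
  refine Finset.sum_congr rfl fun i _ => ?_
  rw [map_mul, aeval_X, mul_comm]

/-- `π` is orthogonal to `W` -/
theorem B_perp (S : Setup q f W π) {l : F} (hl0 : l ≠ 0)
    (hl : ∀ v : Fin 7 → F, (l * aeval v f) ^ q = l * aeval v f)
    {x y : Fin 7 → F} (hx : x ∈ π) (hy : y ∈ W) : Bco q f x y = 0 := by
  classical
  by_cases hyπ : y ∈ π
  · exact S.B_zero hyπ hx
  by_contra hB
  have hq := S.hq
  have hnz : ∀ t : F, aeval (y + t • x) f ≠ 0 := by
    intro t h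
    apply hyπ
    have := (S.hmem _ (W.add_mem hy (W.smul_mem t (S.hπW hx)))).1 h
    simpa using π.sub_mem this (π.smul_mem t hx)
  set K : Finset F := Finset.univ.filter fun a : F => a ≠ 0 ∧ a ^ q = a with hK
  have hKc : K.card ≤ q - 1 := by
    have hd : (Polynomial.X ^ q - Polynomial.X : Polynomial F).natDegree = q :=
      FiniteField.X_pow_card_sub_X_natDegree_eq F (by omega)
    have h0 : (Polynomial.X ^ q - Polynomial.X : Polynomial F) ≠ 0 := by
      intro h; rw [h, Polynomial.natDegree_zero] at hd; omega
    have h1 := card_zeros_le h0 hd.le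
    have h2 : (insert 0 K).card ≤ q := by
      refine le_trans (Finset.card_le_card ?_) h1
      intro a ha
      refine Finset.mem_filter.2 ⟨Finset.mem_univ _, ?_⟩
      rw [Polynomial.eval_sub, Polynomial.eval_pow, Polynomial.eval_X]
      rcases Finset.mem_insert.1 ha with rfl | ha
      · rw [zero_pow (by omega), sub_zero]
      · rw [(Finset.mem_filter.1 ha).2.2, sub_self]
    rw [Finset.card_insert_of_notMem (fun h => (Finset.mem_filter.1 h).2.1 rfl)] at h2
    omega
  have hmap : ∀ t ∈ (Finset.univ : Finset F), l * aeval (y + t • x) f ∈ K := fun t _ =>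
    Finset.mem_filter.2 ⟨Finset.mem_univ _, mul_ne_zero hl0 (hnz t), hl _⟩
  have hfib : ∀ a ∈ K, (Finset.univ.filter fun t : F => l * aeval (y + t • x) f = a).card ≤ q := by
    intro a _
    have hc : (pencil f y x - Polynomial.C (l⁻¹ * a)).coeff q ≠ 0 := by
      rw [Polynomial.coeff_sub, Polynomial.coeff_C_of_ne_zero (by omega), sub_zero]
      exact hB
    have h0 : pencil f y x - Polynomial.C (l⁻¹ * a) ≠ 0 := by
      intro h; apply hc; rw [h, Polynomial.coeff_zero]
    have hd : (pencil f y x - Polynomial.C (l⁻¹ * a)).natDegree ≤ q := by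
      rw [Polynomial.natDegree_sub_C]; exact S.deg_le y hx
    refine le_trans (Finset.card_le_card ?_) (card_zeros_le h0 hd)
    intro t ht
    refine Finset.mem_filter.2 ⟨Finset.mem_univ _, ?_⟩
    rw [Polynomial.eval_sub, pencil_eval', Polynomial.eval_C, ← (Finset.mem_filter.1 ht).2,
      inv_mul_cancel_left₀ hl0, sub_self]
  have h := Finset.card_le_mul_card_image_of_maps_to hmap q hfib
  rw [Finset.card_univ, S.hcard] at h
  have h2 := Nat.mul_le_mul_left q hKc
  have h3 : q * (q - 1) + q = q ^ 2 := by
    obtain ⟨m, rfl⟩ : ∃ m, q = m + 1 := ⟨q - 1, by omega⟩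
    rw [Nat.add_sub_cancel]; ring
  omega

theorem cone (S : Setup q f W π) (U : Submodule F (Fin 7 → F)) (hU : finrank F U = 6)
    (hWU : W ≤ U) : ∃ (l : F) (η : (Fin 7 → F) → (Fin 7 → F) → F), l ≠ 0 ∧
      IsHermitianForm q η ∧ HasRadicalDimOn η U 1 ∧ ∀ v, η v v = l * aeval v f := by
  have hq := S.hq
  obtain ⟨l, hl0, hl⟩ := S.exists_lambda
  let η : (Fin 7 → F) → (Fin 7 → F) → F := fun v w => l * Bco q f w v
  have hadd1 : ∀ u v w, η (u + v) w = η u w + η v w := fun u v w => by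
    change l * _ = l * _ + l * _
    rw [S.B_add, mul_add]
  have hsm1 : ∀ (a : F) v w, η (a • v) w = a * η v w := fun a v w => by
    change l * _ = a * (l * _)
    rw [S.B_smul]; ring
  have hherm : ∀ v w, η w v = (η v w) ^ q := by
    intro v w
    have h := S.real_poly (Polynomial.C l * pencil f w v)
      ((Polynomial.natDegree_C_mul_le _ _).trans (pencil_top S.hf w v).1) (by
      intro s _
      rw [Polynomial.eval_mul, Polynomial.eval_C, pencil_eval']
      exact hl _)
    have h2 := h.2
    rw [Polynomial.coeff_C_mul, Polynomial.coeff_C_mul] at h2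
    have h3 := pencil_coeff_reverse S.hf v w (show q ≤ q + 1 by omega)
    have h4 := pencil_coeff_reverse S.hf v w (show 1 ≤ q + 1 by omega)
    rw [Nat.add_sub_cancel] at h4
    rw [h4] at h2
    exact h2
  have hadd2 : ∀ u v w, η u (v + w) = η u v + η u w := fun u v w => by
    rw [hherm (v + w) u, hadd1, S.frob, ← hherm, ← hherm]
  have hsm2 : ∀ (a : F) v w, η v (a • w) = a ^ q * η v w := fun a v w => by
    rw [hherm (a • w) v, hsm1, mul_pow, ← hherm]
  have hself : ∀ v, η v v = l * aeval v f := fun v => by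
    change l * _ = _
    rw [S.B_self]
  have hperp : ∀ x ∈ π, ∀ y ∈ W, η x y = 0 := by
    intro x hx y hy
    rw [hherm y x]
    change (l * Bco q f x y) ^ q = 0
    rw [S.B_perp hl0 hl hx hy, mul_zero, zero_pow (by omega)]
  have hex : ∀ u, u ∉ W → ∃ d ∈ π, η d u ≠ 0 := by
    intro u hu
    obtain ⟨d, hd, hB⟩ := S.exists_B hu
    refine ⟨d, hd, ?_⟩
    rw [hherm u d]
    exact pow_ne_zero q (mul_ne_zero hl0 hB)
  let L : (Fin 7 → F) → ((Fin 7 → F) →ₗ[F] F) := fun w =>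
    { toFun := fun v => η v w
      map_add' := fun u v => hadd1 u v w
      map_smul' := fun a v => hsm1 a v w }
  have hL : ∀ w v, L w v = η v w := fun _ _ => rfl
  refine ⟨l, η, hl0, ⟨hadd1, hadd2, hsm1, hherm⟩, ?_, hself⟩
  obtain ⟨u₁, hu₁U, hu₁⟩ := exists_mem_not_mem (U := W) (K := U) (by rw [hU, S.hW]; norm_num)
  have hr1 := finrank_sup_span W hu₁
  rw [S.hW] at hr1
  obtain ⟨u₂, hu₂U, hu₂⟩ := exists_mem_not_mem (U := W ⊔ Submodule.span F {u₁}) (K := U)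
    (by omega)
  have hr2 := finrank_sup_span _ hu₂
  rw [hr1] at hr2
  have hUeq : W ⊔ Submodule.span F {u₁} ⊔ Submodule.span F {u₂} = U := by
    refine Submodule.eq_of_le_of_finrank_eq (sup_le (sup_le hWU ?_) ?_) (by rw [hr2, hU])
    · rw [Submodule.span_singleton_le_iff_mem]; exact hu₁U
    · rw [Submodule.span_singleton_le_iff_mem]; exact hu₂U
  obtain ⟨d₁, hd₁, hη₁⟩ := hex u₁ hu₁
  have hk1 := finrank_inf_ker π (L u₁) hd₁ hη₁
  rw [S.hπ] at hk1
  have hx2 : ∃ x ∈ π ⊓ LinearMap.ker (L u₁), L u₂ x ≠ 0 := by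
    by_contra hcon
    push Not at hcon
    set α := η d₁ u₂ / η d₁ u₁ with hα
    obtain ⟨d, hd, hne⟩ := hex (u₂ + (-α ^ q) • u₁) (fun h => hu₂ (by
      have h1 := Submodule.add_mem (W ⊔ Submodule.span F {u₁}) (Submodule.mem_sup_left h)
        (Submodule.mem_sup_right (S := W) (Submodule.smul_mem _ (α ^ q)
          (Submodule.mem_span_singleton_self (R := F) u₁)))
      have h2 : u₂ + (-α ^ q) • u₁ + (α ^ q) • u₁ = u₂ := by module
      rwa [h2] at h1))
    apply hne
    have h1 := hcon (d + (-(η d u₁ / η d₁ u₁)) • d₁)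
      ⟨π.add_mem hd (π.smul_mem _ hd₁), by
        change η _ u₁ = 0
        rw [hadd1, hsm1, neg_mul, div_mul_cancel₀ _ hη₁, add_neg_cancel]⟩
    rw [hL, hadd1, hsm1] at h1
    rw [hadd2, hsm2, S.neg_pow', S.pow_card, hα]
    rw [← h1]
    ring
  obtain ⟨x₂, hx₂, hη₂⟩ := hx2
  have hk2 := finrank_inf_ker _ (L u₂) hx₂ hη₂
  refine ⟨π ⊓ LinearMap.ker (L u₁) ⊓ LinearMap.ker (L u₂), ?_, by omega, ?_⟩
  · exact (inf_le_left.trans inf_le_left).trans (S.hπW.trans hWU)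
  · intro v hv
    constructor
    · rintro ⟨⟨hvπ, hv1⟩, hv2⟩ w hw
      have hv1' : η v u₁ = 0 := hv1
      have hv2' : η v u₂ = 0 := hv2
      rw [← hUeq] at hw
      obtain ⟨y, hy, z, hz, rfl⟩ := Submodule.mem_sup.1 hw
      obtain ⟨y', hy', z', hz', rfl⟩ := Submodule.mem_sup.1 hy
      obtain ⟨a, rfl⟩ := Submodule.mem_span_singleton.1 hz
      obtain ⟨a', rfl⟩ := Submodule.mem_span_singleton.1 hz'
      rw [hadd2, hadd2, hsm2, hsm2, hv1', hv2', hperp v hvπ y' hy']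
      ring
    · intro h
      have hvW : v ∈ W := by
        by_contra hvW
        obtain ⟨d, hd, hne⟩ := hex v hvW
        apply hne
        rw [hherm v d, h d (hWU (S.hπW hd)), zero_pow (by omega)]
      have hvπ : v ∈ π := by
        have h1 := h v hv
        rw [hself] at h1
        exact (S.hmem v hvW).1 ((mul_eq_zero.1 h1).resolve_left hl0)
      exact ⟨⟨hvπ, h u₁ hu₁U⟩, h u₂ hu₂U⟩

end Setup
end

theorem char_facts {q : ℕ} (hq : ∃ p k : ℕ, p.Prime ∧ 0 < k ∧ q = p ^ k)
    {F : Type} [Field F] [Fintype F] (hcardF : Fintype.card F = q ^ 2) :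
    (q : F) = 0 ∧ ∀ a b : F, (a + b) ^ q = a ^ q + b ^ q := by
  obtain ⟨p, k, hp, hk, rfl⟩ := hq
  obtain ⟨r, hr⟩ := CharP.exists F
  obtain ⟨n, hrp, hn⟩ := FiniteField.card F r
  have hrp' : r = p := by
    rw [hcardF, ← pow_mul] at hn
    have h1 : r ∣ p ^ (k * 2) := by rw [hn]; exact dvd_pow_self r n.ne_zero
    exact (Nat.prime_dvd_prime_iff_eq hrp hp).1 (hrp.dvd_of_dvd_pow h1)
  subst hrp'
  have : Fact r.Prime := ⟨hp⟩
  refine ⟨?_, fun a b => add_pow_char_pow a b r k⟩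
  rw [Nat.cast_pow, CharP.cast_eq_zero, zero_pow hk.ne']

theorem count_hyp {q : ℕ} {F : Type} [Field F] [Fintype F] (hcard : Fintype.card F = q ^ 2)
    {f : MvPolynomial (Fin 7) F} (hf : f.IsHomogeneous (q + 1)) (U : Submodule F (Fin 7 → F)) :
    Nat.card {v : Fin 7 → F // v ∈ U ∧ aeval v f = 0} =
      (q ^ 2 - 1) * (hypersurfacePts f ∩ projPts U).ncard + 1 := by
  rw [← hcard]
  refine count_points _ ?_ ?_ _ ?_
  · refine ⟨U.zero_mem, ?_⟩
    have := aeval_smul_hom hf 0 (0 : Fin 7 → F)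
    rw [zero_smul, zero_pow (by omega), zero_mul] at this
    exact this
  · intro c v hc
    rw [aeval_smul_hom hf, Submodule.smul_mem_iff _ hc, mul_eq_zero,
      or_iff_right (pow_ne_zero _ hc)]
  · intro P
    have h1 : P ∈ projPts U ↔ P.rep ∈ U := by
      change P.submodule ≤ U ↔ _
      rw [Projectivization.submodule_eq, Submodule.span_singleton_le_iff_mem]
    have h2 : P ∈ hypersurfacePts f ↔ aeval P.rep f = 0 := by
      change eval P.rep f = 0 ↔ _
      rw [aeval_eq_eval]
    rw [Set.mem_inter_iff, h1, h2, and_comm]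

/-- Under the hypotheses of the main theorem, every `5`-space `Σ₅` through the special
solid `Σ₃` meets `S` in a Hermitian cone with vertex a point and base a non-singular
Hermitian variety `H(4,q²)`; in particular `|S ∩ Σ₅| = q⁹ + q⁷ + q⁴ + q² + 1`. -/
theorem stmt_12 (q : ℕ) (hq : ∃ p k : ℕ, p.Prime ∧ 0 < k ∧ q = p ^ k) (hq2 : 2 < q)
    (F : Type) [Field F] [Fintype F] (hcardF : Fintype.card F = q ^ 2)
    (f : MvPolynomial (Fin 7) F) (hf0 : f ≠ 0) (hfdeg : f.IsHomogeneous (q + 1))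
    (S : Set (Projectivization F (Fin 7 → F))) (hS : S = hypersurfacePts f)
    (hnosolid : ¬ ∃ W : Submodule F (Fin 7 → F), Module.finrank F W = 4 ∧ projPts W ⊆ S)
    (hcardS : S.ncard = q ^ 11 + q ^ 9 + q ^ 7 + q ^ 4 + q ^ 2 + 1)
    (W₃ : Submodule F (Fin 7 → F)) (hW₃ : Module.finrank F W₃ = 4)
    (hint : (S ∩ projPts W₃).ncard = q ^ 4 + q ^ 2 + 1) :
    ∀ W₅ : Submodule F (Fin 7 → F), Module.finrank F W₅ = 6 → W₃ ≤ W₅ →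
      IsHermitianConeOn q W₅ 1 (S ∩ projPts W₅) ∧
      (S ∩ projPts W₅).ncard = q ^ 9 + q ^ 7 + q ^ 4 + q ^ 2 + 1 := by
  intro W₅ hW₅ hle
  obtain ⟨hqF, hfrob⟩ := char_facts hq hcardF
  have hq1 : 1 ≤ q ^ 2 := Nat.one_le_pow _ _ (by omega)
  have hZ : Nat.card {v : Fin 7 → F // aeval v f = 0} + q ^ 7 = q ^ 13 + q ^ 6 := by
    have h := count_hyp hcardF hfdeg ⊤
    have h1 : hypersurfacePts f ∩ projPts (⊤ : Submodule F (Fin 7 → F)) = S := by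
      rw [hS]
      exact Set.inter_eq_left.2 fun P _ => show P.submodule ≤ ⊤ from le_top
    have h2 : Nat.card {v : Fin 7 → F // aeval v f = 0} =
        Nat.card {v : Fin 7 → F // v ∈ (⊤ : Submodule F (Fin 7 → F)) ∧ aeval v f = 0} :=
      Nat.card_congr (Equiv.subtypeEquivRight fun v =>
        ⟨fun h => ⟨Submodule.mem_top, h⟩, fun h => h.2⟩)
    rw [h2, h, h1, hcardS]
    zify [hq1]; ring
  have hc4 : Nat.card {v : W₃ // aeval (v : Fin 7 → F) f = 0} = q ^ 6 := by
    have h := count_hyp hcardF hfdeg W₃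
    rw [← hS, hint] at h
    have h2 : Nat.card {v : W₃ // aeval (v : Fin 7 → F) f = 0} =
        Nat.card {v : Fin 7 → F // v ∈ W₃ ∧ aeval v f = 0} :=
      Nat.card_congr (Equiv.subtypeSubtypeEquivSubtypeInter (fun v => v ∈ W₃)
        (fun v : Fin 7 → F => aeval v f = 0))
    rw [h2, h]
    zify [hq1]; ring
  have hext := no_external hcardF hqF hq2 hfdeg (by
    classical
    rw [← hZ, Nat.card_eq_fintype_card, Fintype.card_subtype])
  obtain ⟨π, hπW, hπ, hmem⟩ := bose_burton hcardF hfdeg hext W₃ hW₃ hc4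
  have hset : Setup q f W₃ π :=
    { hq := hq2
      hcard := hcardF
      hqF := hqF
      frob := hfrob
      hf := hfdeg
      hπW := hπW
      hπ := hπ
      hW := hW₃
      hmem := hmem
      hns := by
        intro U hU
        by_contra hcon
        push Not at hcon
        refine hnosolid ⟨U, hU, fun P hP => ?_⟩
        rw [hS]
        have h1 : P.rep ∈ U := by
          have h2 : P.submodule ≤ U := hP
          rwa [Projectivization.submodule_eq, Submodule.span_singleton_le_iff_mem] at h2
        have h3 := hcon _ h1
        change eval P.rep f = 0
        rw [aeval_eq_eval] at h3
        exact h3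
      hZ := hZ }
  constructor
  · obtain ⟨l, η, hl0, h1, h2, h3⟩ := hset.cone W₅ hW₅ hle
    refine ⟨η, h1, h2, ?_⟩
    ext P
    rw [hS]
    change (eval P.rep f = 0 ∧ P.submodule ≤ W₅) ↔ (P.submodule ≤ W₅ ∧ η P.rep P.rep = 0)
    rw [h3, and_comm, mul_eq_zero, or_iff_right hl0, aeval_eq_eval]
  · have h1 := hset.card_U W₅ hle hW₅
    rw [count_hyp hcardF hfdeg W₅, ← hS] at h1
    have h2 : (q ^ 2 - 1) * (S ∩ projPts W₅).ncard =
        (q ^ 2 - 1) * (q ^ 9 + q ^ 7 + q ^ 4 + q ^ 2 + 1) := by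
      zify [hq1] at h1 ⊢
      linear_combination h1
    refine Nat.eq_of_mul_eq_mul_left ?_ h2
    have : 9 ≤ q ^ 2 := by nlinarith
    omega
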